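/- arXiv:math/0508153 — 2 statements merged into one kernel-verified Lean document; each statement's English description precedes it below -/
import Mathlib

section
/- For every integer n ≥ 3, the expected number of Yang–Baxter moves in a uniformly random reduced decomposition of the longest element w_0^B ∈ B_n equals 2 − 4/n; equivalently, n · Σ_{ω ∈ R(w_0^B)} yb(ω) = (2n − 4) · |R(w_0^B)|, where yb(ω) denotes the number of Yang–Baxter moves in ω. -/
/-- The generator `sᵢ` of the hyperoctahedral group `Bₙ`, realized as a permutation of `ℤ`:
`s₀` swaps `1` and `-1`; for `i ≥ 1`, `sᵢ` swaps `i` with `i+1` and `-i` with `-(i+1)`,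
fixing all other integers. -/
def sB (i : ℕ) : Equiv.Perm ℤ :=
  if i = 0 then Equiv.swap 1 (-1)
  else Equiv.swap (i : ℤ) ((i : ℤ) + 1) * Equiv.swap (-(i : ℤ)) (-((i : ℤ) + 1))

/-- The product `s_{i₁} ⋯ s_{i_ℓ}` corresponding to the word `i₁ ⋯ i_ℓ`. -/
def wordProd (l : List ℕ) : Equiv.Perm ℤ := (l.map sB).prod

/-- The underlying function of the longest element `w₀ᴮ ∈ Bₙ`: `i ↦ -i` on `{-n, …, n}`,
fixing all other integers. -/
def w0BFun (n : ℕ) : ℤ → ℤ := fun i => if -(n : ℤ) ≤ i ∧ i ≤ (n : ℤ) then -i else i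

lemma w0BFun_involutive (n : ℕ) : Function.Involutive (w0BFun n) := by
  intro i
  unfold w0BFun
  split_ifs <;> omega

/-- The longest element `w₀ᴮ ∈ Bₙ`, as a permutation of `ℤ`. -/
def w0B (n : ℕ) : Equiv.Perm ℤ := (w0BFun_involutive n).toPerm

/-- `l` is a reduced decomposition of `w` in `Bₙ`: a word over the alphabet `{0, …, n-1}`
whose product of generators is `w`, of minimal length among all such words. -/
def IsReducedWord (n : ℕ) (w : Equiv.Perm ℤ) (l : List ℕ) : Prop :=
  (∀ i ∈ l, i < n) ∧ wordProd l = w ∧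
    ∀ l' : List ℕ, (∀ i ∈ l', i < n) → wordProd l' = w → l.length ≤ l'.length

/-- `R(w)`, the set of reduced decompositions of `w` in `Bₙ`. -/
def RSet (n : ℕ) (w : Equiv.Perm ℤ) : Set (List ℕ) := {l | IsReducedWord n w l}

/-- The length `ℓ(w)` of `w ∈ Bₙ`: the minimal length of a word over `{0, …, n-1}`
whose product of generators is `w`. -/
noncomputable def lenB (n : ℕ) (w : Equiv.Perm ℤ) : ℕ :=
  sInf {m : ℕ | ∃ l : List ℕ, (∀ i ∈ l, i < n) ∧ wordProd l = w ∧ l.length = m}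

/-- Whether a word begins with `k (k+1) k` or `(k+1) k (k+1)` for some `k ≥ 1`. -/
def isYB : List ℕ → Bool
  | a :: b :: c :: _ => (a != 0 && b == a + 1 && c == a) || (b != 0 && a == b + 1 && c == b + 1)
  | _ => false

/-- The number of Yang–Baxter moves in a word. -/
def ybCount (l : List ℕ) : ℕ :=
  ((Finset.range l.length).filter fun j => isYB (l.drop j) = true).card

/-- Whether a word begins with `0101` or `1010`. -/
def is01 : List ℕ → Bool
  | a :: b :: c :: d :: _ =>
      (a == 0 && b == 1 && c == 0 && d == 1) || (a == 1 && b == 0 && c == 1 && d == 0)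
  | _ => false

/-- The number of 01 moves in a word. -/
def m01Count (l : List ℕ) : ℕ :=
  ((Finset.range l.length).filter fun j => is01 (l.drop j) = true).card

/-- The underlying function of `w_k ∈ Bₙ`: `k ↦ -(k+2)`, `k+2 ↦ -k`, and `i ↦ -i` for all
other `i ∈ {1, …, n}`, extended by `w(-i) = -w(i)` and fixing all integers outside
`{-n, …, -1, 1, …, n}`. -/
def wkFun (n k : ℕ) : ℤ → ℤ := fun i =>
  if -(n : ℤ) ≤ i ∧ i ≤ (n : ℤ) then
    if i = (k : ℤ) then -((k : ℤ) + 2)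
    else if i = (k : ℤ) + 2 then -(k : ℤ)
    else if i = -(k : ℤ) then (k : ℤ) + 2
    else if i = -((k : ℤ) + 2) then (k : ℤ)
    else -i
  else i

/-- The underlying function of `w' ∈ Bₙ`: `1 ↦ 1`, `2 ↦ 2`, and `i ↦ -i` for `3 ≤ i ≤ n`,
extended by `w(-i) = -w(i)` and fixing all integers outside `{-n, …, -1, 1, …, n}`. -/
def wpFun (n : ℕ) : ℤ → ℤ := fun i =>
  if (-(n : ℤ) ≤ i ∧ i ≤ (n : ℤ)) ∧ (i < -2 ∨ 2 < i) then -i else i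

/-- `w`, viewed as a signed permutation of `{1, …, n}` via the values `w(1), …, w(n)`,
contains the signed pattern `p` (given by its list of values `p(1), …, p(m)`). -/
def ContainsPattern (n : ℕ) (w : ℤ → ℤ) (p : List ℤ) : Prop :=
  ∃ j : Fin p.length → ℤ, StrictMono j ∧ (∀ r, 1 ≤ j r ∧ j r ≤ (n : ℤ)) ∧
    (∀ r s, w (j r) < w (j s) ↔ p.get r < p.get s) ∧
    (∀ r, w (j r) < 0 ↔ p.get r < 0)

/-!
A reduced decomposition of `w₀ᴮ` may be rotated by one letter, because `w₀ᴮ` is central. Hence a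
Yang–Baxter move is equally likely at each of the `n ^ 2 - 2` positions, and it suffices to count
the reduced decompositions that begin with a braid `k, k + 1, k` or `k + 1, k, k + 1`.

The divided differences `∂ i f = (f - f ∘ s i) / α i` on functions on signed permutations satisfy
the nil-Coxeter relations. Applying `(∂ 0 + ⋯ + ∂ (n - 1)) ^ (n ^ 2)` to a function `f` therefore
multiplies `∂ w₀ᴮ f` by the number of reduced decompositions, and applying a braid after the power
`n ^ 2 - 3` multiplies it by the number of those that begin with that braid. The function `f` is a
vacuum expectation of neutral fermions in a Clifford algebra, dressed with the coordinates of the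
signed permutation, on which `∂ 0 + ⋯ + ∂ (n - 1)` acts as the derivation that lowers the fermion
modes. Powers of this derivation are evaluated by Thrall's product formula, for the staircase
`1, 3, …, 2 n - 1` and for the shapes that arise from it by a braid, so that the theorem becomes a
summation of residues of a rational function.
-/

namespace YangBaxterB

open Finset

section ResidueWeight

variable {K : Type*} [Field K]

/-- The weight of the index `i` in the partial fraction expansion of the rational function
`∏ j < n, (x - u j - c j) / (x - u j)`, whose residue at the pole `u i` is
`-c i * residueWeight u c n i`. -/
def residueWeight (u c : ℕ → K) (n i : ℕ) : K :=
  ∏ j ∈ (range n).erase i, (u i - u j - c j) / (u i - u j)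

variable {u : ℕ → K} {n : ℕ} (c : ℕ → K)

lemma residueWeight_succ {i : ℕ} (u : ℕ → K) (hi : i < n) :
    residueWeight u c (n + 1) i = (u i - u n - c n) / (u i - u n) * residueWeight u c n i := by
  rw [residueWeight, range_add_one, erase_insert_of_ne hi.ne', prod_insert (by simp), residueWeight]

lemma residueWeight_succ_self (u : ℕ → K) (n : ℕ) :
    residueWeight u c (n + 1) n = ∏ j ∈ range n, (u n - u j - c j) / (u n - u j) := by
  rw [residueWeight, range_add_one, erase_insert (by simp)]

lemma sum_mul_residueWeight_succ (hu : Set.InjOn u (Set.Iio (n + 1))) (g : ℕ → K) :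
    ∑ i ∈ range n, g i * residueWeight u c (n + 1) i =
      ∑ i ∈ range n, g i * residueWeight u c n i +
        c n * ∑ i ∈ range n, g i * residueWeight u c n i / (u n - u i) := by
  rw [mul_sum, ← sum_add_distrib]
  refine sum_congr rfl fun i hi => ?_
  have hi := mem_range.1 hi
  have hne : u n - u i ≠ 0 :=
    sub_ne_zero.2 (hu.ne (Nat.lt_succ_self n) (Nat.lt_succ_of_lt hi) hi.ne')
  rw [residueWeight_succ c u hi, ← neg_sub (u n) (u i)]
  field_simp
  ring

theorem prod_sub_sub_div_eq_one_sub_sum (hu : Set.InjOn u (Set.Iio n)) {x : K}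
    (hx : ∀ j < n, x ≠ u j) :
    ∏ j ∈ range n, (x - u j - c j) / (x - u j) =
      1 - ∑ i ∈ range n, c i * residueWeight u c n i / (x - u i) := by
  induction n generalizing x with
  | zero => simp
  | succ n ih =>
    have hlt : ∀ i ∈ range n, i < n := fun i => mem_range.1
    have hsub := hu.mono (Set.Iio_subset_Iio n.le_succ)
    have hxu : ∀ j < n + 1, x - u j ≠ 0 := fun j hj => sub_ne_zero.2 (hx j hj)
    have hn : ∀ j < n, u n ≠ u j := fun j hj =>
      hu.ne (Nat.lt_succ_self n) (Nat.lt_succ_of_lt hj) hj.ne'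
    have partial_fractions : ∑ i ∈ range n, c i / (x - u i) * residueWeight u c n i / (u n - u i) =
        (∑ i ∈ range n, c i * residueWeight u c n i / (u n - u i) -
          ∑ i ∈ range n, c i * residueWeight u c n i / (x - u i)) / (x - u n) := by
      rw [← sum_sub_distrib, sum_div]
      refine sum_congr rfl fun i hi => ?_
      have h₁ := hxu i (Nat.lt_succ_of_lt (hlt i hi))
      have h₂ := hxu n n.lt_succ_self
      have h₃ : u n - u i ≠ 0 := sub_ne_zero.2 (hn i (hlt i hi))
      field_simp
      ring
    rw [prod_range_succ, ih hsub fun j hj => hx j (by lia), sum_range_succ,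
      residueWeight_succ_self, ih hsub hn]
    simp only [mul_div_right_comm _ (residueWeight u c (n + 1) _)]
    rw [sum_mul_residueWeight_succ c hu, partial_fractions]
    simp only [← mul_div_right_comm]
    have := hxu n n.lt_succ_self
    field_simp
    ring

theorem sum_mul_residueWeight (hu : Set.InjOn u (Set.Iio n)) :
    ∑ i ∈ range n, c i * residueWeight u c n i = ∑ i ∈ range n, c i := by
  induction n with
  | zero => simp
  | succ n ih =>
    have hsub := hu.mono (Set.Iio_subset_Iio n.le_succ)
    rw [sum_range_succ, sum_mul_residueWeight_succ c hu, ih hsub, residueWeight_succ_self,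
      prod_sub_sub_div_eq_one_sub_sum c hsub fun j hj => hu.ne n.lt_succ_self (by grind) hj.ne',
      sum_range_succ]
    ring

theorem sum_mul_mul_residueWeight (hu : Set.InjOn u (Set.Iio n)) :
    ∑ i ∈ range n, c i * u i * residueWeight u c n i =
      ∑ i ∈ range n, c i * (u i - ∑ j ∈ range i, c j) := by
  induction n with
  | zero => simp
  | succ n ih =>
    have hsub := hu.mono (Set.Iio_subset_Iio n.le_succ)
    have hn : ∀ j < n, u n ≠ u j := fun j hj =>
      hu.ne (Nat.lt_succ_self n) (Nat.lt_succ_of_lt hj) hj.ne'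
    have shift : ∑ i ∈ range n, c i * u i * residueWeight u c n i / (u n - u i) =
        u n * ∑ i ∈ range n, c i * residueWeight u c n i / (u n - u i) -
          ∑ i ∈ range n, c i := by
      rw [← sum_mul_residueWeight c hsub, mul_sum, ← sum_sub_distrib]
      refine sum_congr rfl fun i hi => ?_
      have := sub_ne_zero.2 (hn i (mem_range.1 hi))
      field_simp
      ring
    rw [sum_range_succ, sum_mul_residueWeight_succ c hu, ih hsub, residueWeight_succ_self,
      prod_sub_sub_div_eq_one_sub_sum c hsub hn, shift, sum_range_succ]
    ring

end ResidueWeight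

section ThrallProduct

open Nat (factorial descFactorial)
open Function (update update_self update_of_ne)

/-- The factor contributed by a pair of parts `x`, `y` to Thrall's product. -/
def shiftedRatio (x y : ℚ) : ℚ := (x - y) / (x + y)

lemma shiftedRatio_swap (x y : ℚ) : shiftedRatio y x = -shiftedRatio x y := by
  rw [shiftedRatio, shiftedRatio, ← neg_div, neg_sub, add_comm]

lemma shiftedRatio_natCast_ne_zero {x y : ℕ} (h : x ≠ y) : shiftedRatio x y ≠ 0 :=
  div_ne_zero (sub_ne_zero.2 (by exact_mod_cast h)) (by norm_cast; lia)

/-- Thrall's product: if `a` is increasing on `{0, …, n - 1}`, this times `(∑ a i)!` is the number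
of standard tableaux of the shifted shape whose rows have lengths `a (n - 1), …, a 0`. -/
def thrallProduct (a : ℕ → ℕ) (n : ℕ) : ℚ :=
  ∏ i ∈ range n, ((a i).factorial : ℚ)⁻¹ * ∏ j ∈ range i, shiftedRatio (a i) (a j)

lemma thrallProduct_succ (a : ℕ → ℕ) (n : ℕ) :
    thrallProduct a (n + 1) = thrallProduct a n *
      (((a n).factorial : ℚ)⁻¹ * ∏ j ∈ range n, shiftedRatio (a n) (a j)) :=
  prod_range_succ _ _

lemma thrallProduct_congr {a b : ℕ → ℕ} {n : ℕ} (h : ∀ i < n, a i = b i) :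
    thrallProduct a n = thrallProduct b n := by
  refine prod_congr rfl fun i hi => ?_
  have hi := mem_range.1 hi
  rw [h i hi, prod_congr rfl fun j hj => by rw [h j ((mem_range.1 hj).trans hi)]]

lemma thrallProduct_pos {a : ℕ → ℕ} {n : ℕ} (ha : StrictMonoOn a (Set.Iio n)) :
    0 < thrallProduct a n := by
  refine prod_pos fun i hi => mul_pos (by positivity) (prod_pos fun j hj => ?_)
  have hji := mem_range.1 hj
  have hlt : (a j : ℚ) < a i := by
    exact_mod_cast ha (hji.trans (mem_range.1 hi)) (mem_range.1 hi) hji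
  exact div_pos (by linarith) (by linarith [(a j).cast_nonneg (α := ℚ)])

lemma thrallProduct_eq_zero {a : ℕ → ℕ} {n i j : ℕ} (hji : j < i) (hi : i < n) (h : a i = a j) :
    thrallProduct a n = 0 := by
  refine prod_eq_zero (mem_range.2 hi) (mul_eq_zero_of_right _ ?_)
  exact prod_eq_zero (mem_range.2 hji) (by simp [shiftedRatio, h])

lemma thrallProduct_succ_of_zero {a : ℕ → ℕ} {n : ℕ} (h0 : a 0 = 0)
    (hpos : ∀ i < n, 0 < a (i + 1)) :
    thrallProduct a (n + 1) = thrallProduct (fun i => a (i + 1)) n := by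
  rw [thrallProduct, prod_range_succ', thrallProduct]
  simp only [h0, factorial, range_zero, prod_empty, Nat.cast_one, inv_one, mul_one]
  refine prod_congr rfl fun i hi => ?_
  have := (hpos i (mem_range.1 hi)).ne'
  rw [prod_range_succ', h0]
  simp [shiftedRatio, this]

lemma thrallProduct_comp_swap (a : ℕ → ℕ) {n k : ℕ} (hk : k + 1 < n) :
    thrallProduct (a ∘ Equiv.swap k (k + 1)) n = -thrallProduct a n := by
  induction n, hk using Nat.le_induction with
  | base =>
    have fixed : ∀ i < k, (a ∘ Equiv.swap k (k + 1)) i = a i := fun i hi =>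
      congrArg a (Equiv.swap_apply_of_ne_of_ne (by lia) (by lia))
    have row (x : ℚ) : ∏ j ∈ range k, shiftedRatio x ((a ∘ Equiv.swap k (k + 1)) j) =
        ∏ j ∈ range k, shiftedRatio x (a j) :=
      prod_congr rfl fun j hj => by rw [fixed j (mem_range.1 hj)]
    simp only [thrallProduct_succ, thrallProduct_congr fixed, prod_range_succ, row]
    rw [Function.comp_apply, Function.comp_apply, Equiv.swap_apply_left, Equiv.swap_apply_right,
      shiftedRatio_swap (a (k + 1))]
    ring
  | succ n hn ih =>
    have perm : ∏ j ∈ range n, shiftedRatio (a n) (a (Equiv.swap k (k + 1) j)) =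
        ∏ j ∈ range n, shiftedRatio (a n) (a j) :=
      (Equiv.swap k (k + 1)).prod_comp (range n) (fun j => shiftedRatio (a n) (a j))
        fun i hi => by
          have := Equiv.swap_apply_ne_self_iff.1 hi
          simp only [coe_range, Set.mem_Iio]
          lia
    have fixed : Equiv.swap k (k + 1) n = n :=
      Equiv.swap_apply_of_ne_of_ne (by lia) (by lia)
    simp only [thrallProduct_succ, ih, Function.comp_apply, fixed, perm, neg_mul]

lemma thrallProduct_update {a : ℕ → ℕ} {n i : ℕ} (x : ℕ) (hi : i < n)
    (ha : Set.InjOn a (Set.Iio n)) :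
    thrallProduct (update a i x) n = thrallProduct a n * ((a i).factorial / x.factorial *
      ∏ j ∈ (range n).erase i, shiftedRatio x (a j) / shiftedRatio (a i) (a j)) := by
  induction n, hi using Nat.le_induction with
  | base =>
    have fixed : ∀ j < i, update a i x j = a j := fun j hj => update_of_ne hj.ne _ _
    have row : ∏ j ∈ range i, shiftedRatio x (update a i x j) =
        (∏ j ∈ range i, shiftedRatio (a i) (a j)) *
          ∏ j ∈ range i, shiftedRatio x (a j) / shiftedRatio (a i) (a j) := by
      rw [← prod_mul_distrib]
      refine prod_congr rfl fun j hj => ?_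
      have hj := mem_range.1 hj
      rw [fixed j hj, mul_div_cancel₀ _ (shiftedRatio_natCast_ne_zero
        (ha.ne (Nat.lt_succ_self i) (Nat.lt_succ_of_lt hj) hj.ne'))]
    simp only [thrallProduct_succ, thrallProduct_congr fixed, update_self, row]
    rw [range_add_one, erase_insert (by simp)]
    have : ((a i).factorial : ℚ) ≠ 0 := by positivity
    field_simp
  | succ n hn ih =>
    have row : ∏ j ∈ range n, shiftedRatio (a n) (update a i x j) =
        (∏ j ∈ range n, shiftedRatio (a n) (a j)) *
          (shiftedRatio x (a n) / shiftedRatio (a i) (a n)) := by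
      have hne := shiftedRatio_natCast_ne_zero
        (ha.ne (hn.trans n.le_succ) (Nat.lt_succ_self n) (Nat.ne_of_lt hn))
      rw [← mul_prod_erase (range n) _ (mem_range.2 hn),
        ← mul_prod_erase (range n) _ (mem_range.2 hn), update_self,
        prod_congr rfl fun j hj => by rw [update_of_ne (ne_of_mem_erase hj)],
        shiftedRatio_swap x, shiftedRatio_swap (a i)]
      field_simp
    rw [thrallProduct_succ, thrallProduct_succ, ih (ha.mono (Set.Iio_subset_Iio n.le_succ)),
      update_of_ne (Nat.ne_of_gt hn), row, range_add_one,
      erase_insert_of_ne (Nat.ne_of_gt hn), prod_insert (by simp)]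
    ring

/-- Removing `r` cells from a part of a shifted shape: after the substitution `u = a * (a - r)`
the resulting factor becomes a residue weight. -/
lemma thrallProduct_update_sub {a : ℕ → ℕ} {n i r : ℕ} (hi : i < n) (hr : r ≤ a i)
    (ha : Set.InjOn a (Set.Iio n)) :
    thrallProduct (update a i (a i - r)) n = thrallProduct a n * ((a i).descFactorial r *
      residueWeight (fun j => (a j : ℚ) * (a j - r)) (fun j => 2 * r * (a j : ℚ)) n i) := by
  rw [thrallProduct_update _ hi ha, residueWeight, Nat.cast_sub hr]
  have hfact : ((a i - r).factorial : ℚ) * (a i).descFactorial r = (a i).factorial := by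
    exact_mod_cast Nat.factorial_mul_descFactorial hr
  congr 2
  · rw [← hfact, mul_div_cancel_left₀ _ (by positivity)]
  · refine prod_congr rfl fun j _ => ?_
    rw [shiftedRatio, shiftedRatio, div_div_div_eq]
    congr 1 <;> ring

/-- The hook recursion for shifted shapes. -/
theorem sum_thrallProduct_update_pred {a : ℕ → ℕ} {n : ℕ} (hpos : ∀ i < n, 0 < a i)
    (ha : Set.InjOn a (Set.Iio n)) :
    ∑ i ∈ range n, thrallProduct (update a i (a i - 1)) n =
      (∑ i ∈ range n, a i : ℕ) * thrallProduct a n := by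
  have hu : Set.InjOn (fun j => (a j : ℚ) * (a j - (1 : ℕ))) (Set.Iio n) := by
    intro i hi j hj hij
    have hi' : (1 : ℚ) ≤ a i := by exact_mod_cast hpos i hi
    have hj' : (1 : ℚ) ≤ a j := by exact_mod_cast hpos j hj
    have hprod : ((a i : ℚ) - a j) * (a i + a j - 1) = 0 := by
      push_cast at hij
      linear_combination hij
    refine ha hi hj (Nat.cast_injective (R := ℚ) ?_)
    linarith [(mul_eq_zero.1 hprod).resolve_right (by linarith)]
  have residues := sum_mul_residueWeight (fun j => 2 * (1 : ℕ) * (a j : ℚ)) hu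
  rw [sum_congr rfl fun i hi =>
    thrallProduct_update_sub (mem_range.1 hi) (hpos i (mem_range.1 hi)) ha, ← mul_sum, mul_comm]
  simp only [Nat.descFactorial_one, mul_assoc, ← mul_sum] at residues ⊢
  push_cast at residues ⊢
  linear_combination thrallProduct a n / 2 * residues

end ThrallProduct

section Staircase

open Function (update)

/-- The parts `1, 3, …, 2 * n - 1`, in increasing order, of the shifted shape attached to the
longest element of `B_n`. -/
def staircase (i : ℕ) : ℕ := 2 * i + 1

/-- The staircase with three cells removed, one from the part of index `k` and two from the next
one: the shape attached to the longest element after a braid `s_k s_{k+1} s_k` is split off. -/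
def braidShape (k : ℕ) : ℕ → ℕ := update (update staircase k (2 * k)) (k + 1) (2 * k + 1)

lemma strictMono_staircase : StrictMono staircase := fun i j h => by
  simp only [staircase]
  lia

lemma sum_staircase (n : ℕ) : ∑ i ∈ range n, staircase i = n ^ 2 := by
  induction n with
  | zero => rfl
  | succ n ih => rw [sum_range_succ, ih, staircase]; ring

lemma sum_braidShape {n k : ℕ} (hk : k + 1 < n) :
    ∑ i ∈ range n, braidShape k i + 3 = n ^ 2 := by
  have h₁ := sum_update_of_mem (mem_range.2 hk) (update staircase k (2 * k)) (2 * k + 1)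
  have h₂ := sum_update_of_mem (s := range n \ {k + 1}) (i := k) (by simp; lia) staircase (2 * k)
  have h₃ := sum_sdiff (f := staircase) (singleton_subset_iff.2 (mem_range.2 hk))
  have h₄ := sum_sdiff (s₁ := {k}) (s₂ := range n \ {k + 1}) (f := staircase) (by simp; lia)
  rw [sum_singleton] at h₃ h₄
  rw [braidShape, h₁, h₂, ← sum_staircase, ← h₃, ← h₄]
  simp only [staircase]
  lia

lemma braidShape_comp_swap (k : ℕ) :
    braidShape k ∘ Equiv.swap k (k + 1) =
      update staircase (k + 1) (staircase (k + 1) - 3) := by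
  ext j
  simp only [braidShape, Function.comp_apply, Equiv.swap_apply_def, Function.update_apply,
    staircase]
  grind

/-- The residue weight belonging to the removal of three cells from a part of the staircase. -/
def staircaseWeight (n i : ℕ) : ℚ :=
  residueWeight (fun j => (staircase j : ℚ) * (staircase j - (3 : ℕ)))
    (fun j => 2 * (3 : ℕ) * (staircase j : ℚ)) n i

/-- Sorting the shape in which one part lost all three cells costs the sign. -/
lemma thrallProduct_braidShape {n k : ℕ} (hk : k + 1 < n) :
    thrallProduct (braidShape k) n = -(thrallProduct staircase n *
      ((staircase (k + 1)).descFactorial 3 * staircaseWeight n (k + 1))) := by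
  rw [eq_neg_iff_add_eq_zero, ← neg_eq_iff_add_eq_zero, ← thrallProduct_comp_swap _ hk,
    braidShape_comp_swap, thrallProduct_update_sub hk (by simp only [staircase]; lia)
      strictMono_staircase.injective.injOn]
  rfl

lemma cast_descFactorial_three (a : ℕ) :
    (a.descFactorial 3 : ℚ) = a * (a - 1) * (a - 2) := by
  match a with
  | 0 | 1 => simp
  | a + 2 =>
    simp only [Nat.succ_descFactorial_succ, Nat.descFactorial_one]
    push_cast
    ring

lemma injective_staircase_mul_sub_three :
    Function.Injective fun j => (staircase j : ℚ) * (staircase j - (3 : ℕ)) := by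
  intro i j hij
  simp only [staircase] at hij
  push_cast at hij
  have hprod : ((i : ℚ) - j) * (2 * i + 2 * j - 1) = 0 := by linear_combination hij / 2
  rcases mul_eq_zero.1 hprod with h | h
  · exact_mod_cast sub_eq_zero.1 h
  · have odd_eq : 2 * i + 2 * j = 1 := by exact_mod_cast sub_eq_zero.1 h
    lia

lemma sum_descFactorial_mul_staircaseWeight (n : ℕ) :
    ∑ i ∈ range n, (staircase i).descFactorial 3 * staircaseWeight n i =
      -((n : ℚ) ^ 2 * (n ^ 2 - 1)) := by
  set u : ℕ → ℚ := fun j => (staircase j : ℚ) * (staircase j - (3 : ℕ))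
  set c : ℕ → ℚ := fun j => 2 * (3 : ℕ) * (staircase j : ℚ)
  have hu : Set.InjOn u (Set.Iio n) := injective_staircase_mul_sub_three.injOn
  have descFactorial_three (i : ℕ) :
      ((staircase i).descFactorial 3 : ℚ) = (c i * u i + 2 * c i) / 6 := by
    rw [cast_descFactorial_three]
    simp only [c, u]
    push_cast
    ring
  have sum_c (m : ℕ) : ∑ i ∈ range m, c i = 6 * m ^ 2 := by
    rw [← mul_sum, ← Nat.cast_sum, sum_staircase]
    push_cast
    ring
  have sum_moment (m : ℕ) :
      ∑ i ∈ range m, c i * (u i - 6 * i ^ 2) = 6 * (-((m : ℚ) ^ 2 * (m ^ 2 - 1)) - 2 * m ^ 2) := by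
    induction m with
    | zero => simp
    | succ m ih =>
      rw [sum_range_succ, ih]
      simp only [c, u, staircase]
      push_cast
      ring
  have split : ∑ i ∈ range n, (staircase i).descFactorial 3 * staircaseWeight n i =
      (∑ i ∈ range n, c i * u i * residueWeight u c n i +
        2 * ∑ i ∈ range n, c i * residueWeight u c n i) / 6 := by
    rw [mul_sum, ← sum_add_distrib, sum_div]
    refine sum_congr rfl fun i _ => ?_
    rw [descFactorial_three, staircaseWeight]
    ring
  rw [split, sum_mul_mul_residueWeight c hu, sum_mul_residueWeight c hu]
  simp only [sum_c, sum_moment]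
  ring

lemma six_mul_staircaseWeight_one (n : ℕ) :
    6 * staircaseWeight (n + 2) 1 = -(2 * (n + 3) * (n + 2) * (n + 1)) := by
  induction n with
  | zero =>
    have : (range 2).erase 1 = {0} := by decide
    rw [staircaseWeight, residueWeight, zero_add, this, prod_singleton]
    norm_num [staircase]
  | succ n ih =>
    rw [staircaseWeight, residueWeight_succ _ _ (by lia), ← staircaseWeight, mul_left_comm, ih]
    have hden : (3 : ℚ) * (3 - 3) - (2 * (n + 2) + 1) * (2 * (n + 2) + 1 - 3) =
        -((2 * (n + 2) + 1) * (2 * (n + 1))) := by ring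
    simp only [staircase]
    push_cast
    norm_num only at hden ⊢
    rw [hden]
    field_simp
    ring

theorem sum_thrallProduct_braidShape {n : ℕ} (hn : 2 ≤ n) :
    ∑ k ∈ Ico 1 (n - 1), thrallProduct (braidShape k) n =
      thrallProduct staircase n * (n * (n ^ 2 - 1) * (n - 2)) := by
  obtain ⟨m, rfl⟩ := Nat.exists_eq_add_of_le' hn
  set w : ℕ → ℚ := fun i => (staircase i).descFactorial 3 * staircaseWeight (m + 2) i
  have peel : ∑ i ∈ range (m + 2), w i =
      6 * staircaseWeight (m + 2) 1 + ∑ k ∈ Ico 1 (m + 1), w (k + 1) := by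
    rw [sum_range_succ', range_eq_Ico, sum_eq_sum_Ico_succ_bot m.succ_pos]
    norm_num [w, staircase, Nat.descFactorial]
  have shapes : ∑ k ∈ Ico 1 (m + 1), thrallProduct (braidShape k) (m + 2) =
      -(thrallProduct staircase (m + 2) * ∑ k ∈ Ico 1 (m + 1), w (k + 1)) := by
    rw [mul_sum, ← sum_neg_distrib]
    exact sum_congr rfl fun k hk => thrallProduct_braidShape (by have := mem_Ico.1 hk; lia)
  rw [sum_descFactorial_mul_staircaseWeight, six_mul_staircaseWeight_one] at peel
  rw [show m + 2 - 1 = m + 1 from rfl, shapes]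
  push_cast at peel ⊢
  linear_combination thrallProduct staircase (m + 2) * peel

end Staircase

section OrderedProd

variable {M : Type*} [Monoid M]

/-- The product `f 0 * f 1 * ⋯ * f (n - 1)` in a monoid that need not be commutative. -/
def orderedProd (f : ℕ → M) (n : ℕ) : M := ((List.range n).map f).prod

lemma orderedProd_zero (f : ℕ → M) : orderedProd f 0 = 1 := rfl

lemma orderedProd_succ (f : ℕ → M) (n : ℕ) :
    orderedProd f (n + 1) = orderedProd f n * f n := by
  simp [orderedProd, List.range_succ]

lemma orderedProd_add (f : ℕ → M) (n k : ℕ) :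
    orderedProd f (n + k) = orderedProd f n * orderedProd (fun i => f (n + i)) k := by
  simp [orderedProd, List.range_add, Function.comp_def]

lemma orderedProd_succ' (f : ℕ → M) (n : ℕ) :
    orderedProd f (n + 1) = f 0 * orderedProd (fun i => f (i + 1)) n := by
  simp [orderedProd, List.range_succ_eq_map, Function.comp_def]

lemma orderedProd_congr {f g : ℕ → M} {n : ℕ} (h : ∀ i < n, f i = g i) :
    orderedProd f n = orderedProd g n :=
  congrArg List.prod (List.map_congr_left (by simpa using h))

lemma orderedProd_update (f : ℕ → M) {n k : ℕ} (x : M) (hk : k < n) :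
    orderedProd (Function.update f k x) n =
      orderedProd f k * x * orderedProd (fun i => f (k + 1 + i)) (n - (k + 1)) := by
  obtain ⟨m, rfl⟩ := Nat.exists_eq_add_of_le hk
  rw [orderedProd_add, orderedProd_succ, Function.update_self, Nat.add_sub_cancel_left,
    orderedProd_congr fun i hi => Function.update_of_ne hi.ne _ _]
  congr 1
  exact orderedProd_congr fun i _ => Function.update_of_ne (by lia) _ _

end OrderedProd

lemma orderedProd_eq_zero {M : Type*} [MonoidWithZero M] {f : ℕ → M} {n k : ℕ} (hk : k + 1 < n)
    (h : f k * f (k + 1) = 0) : orderedProd f n = 0 := by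
  obtain ⟨m, rfl⟩ := Nat.exists_eq_add_of_le hk
  rw [orderedProd_add, orderedProd_succ, orderedProd_succ, mul_assoc (orderedProd f k), h, mul_zero,
    zero_mul]

section CliffordAlgebra

open CliffordAlgebra

variable {R M : Type*} [CommRing R] [AddCommGroup M] [Module R M]

section Vacuum

variable (B : LinearMap.BilinForm R M)

/-- The vacuum expectation on the Clifford algebra of `B.toQuadraticMap`: the scalar part, read off
in the exterior algebra after deforming the quadratic form to zero along `-B`. -/
noncomputable def vacuum : CliffordAlgebra B.toQuadraticMap →ₗ[R] R :=
  (ExteriorAlgebra.algebraMapInv (R := R) (M := M)).toLinearMap ∘ₗ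
    changeForm (Q := B.toQuadraticMap) (Q' := 0) (B := -B) (by ext m; simp)

lemma vacuum_one : vacuum B 1 = 1 := by simp [vacuum]

/-- Wick's rule. -/
lemma vacuum_ι_mul (m : M) (x : CliffordAlgebra B.toQuadraticMap) :
    vacuum B (ι _ m * x) = vacuum B (contractLeft (B m) x) := by
  have scalar_part_ι_mul (y : ExteriorAlgebra R M) :
      ExteriorAlgebra.algebraMapInv (ι (0 : QuadraticForm R M) m * y) = 0 := by
    rw [map_mul]
    exact mul_eq_zero_of_left (ExteriorAlgebra.lift_ι_apply ..) _
  simp only [vacuum, LinearMap.comp_apply, changeForm_ι_mul, AlgHom.toLinearMap_apply, map_sub]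
  rw [scalar_part_ι_mul, zero_sub, ← changeForm_contractLeft]
  simp

end Vacuum

section Derivation

variable {Q : QuadraticForm R M} (T : M →ₗ[R] M) (hT : ∀ m, QuadraticMap.polar Q m (T m) = 0)

/-- The homomorphism `x ↦ x + ε D x` whose infinitesimal part is the derivation `D` of the
Clifford algebra extending `T`. -/
noncomputable def infinitesimalLift :
    CliffordAlgebra Q →ₐ[R] TrivSqZeroExt (CliffordAlgebra Q) (CliffordAlgebra Q) :=
  CliffordAlgebra.lift Q
    ⟨(TrivSqZeroExt.inlAlgHom R (CliffordAlgebra Q) (CliffordAlgebra Q)).toLinearMap ∘ₗ ι Q +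
      (TrivSqZeroExt.inrHom (CliffordAlgebra Q) (CliffordAlgebra Q)).restrictScalars R ∘ₗ ι Q ∘ₗ T,
    fun m => by
      have anticomm := ι_mul_ι_add_swap (Q := Q) m (T m)
      rw [hT, map_zero] at anticomm
      ext
      · simp [TrivSqZeroExt.algebraMap_eq_inl']
      · simpa [TrivSqZeroExt.algebraMap_eq_inl'] using anticomm⟩

lemma infinitesimalLift_ι (m : M) :
    infinitesimalLift T hT (ι Q m) = TrivSqZeroExt.inl (ι Q m) + TrivSqZeroExt.inr (ι Q (T m)) := by
  simp [infinitesimalLift]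

lemma fst_infinitesimalLift (x : CliffordAlgebra Q) : (infinitesimalLift T hT x).fst = x := by
  have : (TrivSqZeroExt.fstHom R (CliffordAlgebra Q) (CliffordAlgebra Q)).comp
      (infinitesimalLift T hT) = AlgHom.id R _ := by
    ext m
    simp [infinitesimalLift_ι]
  exact DFunLike.congr_fun this x

/-- The derivation of a Clifford algebra that extends an infinitesimal isometry `T`. -/
noncomputable def derivationLift : CliffordAlgebra Q →ₗ[R] CliffordAlgebra Q where
  toFun x := (infinitesimalLift T hT x).snd
  map_add' x y := by simp
  map_smul' c x := by simp

lemma derivationLift_ι (m : M) : derivationLift T hT (ι Q m) = ι Q (T m) := by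
  simp [derivationLift, infinitesimalLift_ι]

lemma derivationLift_mul (x y : CliffordAlgebra Q) :
    derivationLift T hT (x * y) = derivationLift T hT x * y + x * derivationLift T hT y := by
  simp [derivationLift, fst_infinitesimalLift, add_comm]

lemma derivationLift_one : derivationLift T hT 1 = 0 := by simp [derivationLift]

lemma derivationLift_orderedProd (f : ℕ → CliffordAlgebra Q) (n : ℕ) :
    derivationLift T hT (orderedProd f n) =
      ∑ i ∈ range n, orderedProd (Function.update f i (derivationLift T hT (f i))) n := by
  induction n with
  | zero => simp [orderedProd_zero, derivationLift_one]
  | succ n ih =>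
    rw [orderedProd_succ, derivationLift_mul, ih, sum_range_succ, orderedProd_succ,
      Function.update_self, sum_mul,
      orderedProd_congr fun i hi => Function.update_of_ne (Nat.ne_of_lt hi) _ _]
    congr 1
    refine sum_congr rfl fun i hi => ?_
    rw [orderedProd_succ, Function.update_of_ne (mem_range.1 hi).ne']

end Derivation

end CliffordAlgebra

section ModeAlgebra

open CliffordAlgebra PowerSeries

variable (N : ℕ)

/-- A bilinear form on power series with quadratic form `f(X) ↦ [X ^ (4 * N)] f(X) f(-X)`. Among
the many such forms, this one vanishes as soon as its left argument has order above `2 * N`. -/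
noncomputable def modeForm : LinearMap.BilinForm ℚ ℚ⟦X⟧ :=
  ∑ i ∈ range (2 * N), (2 * (-1) ^ i : ℚ) • (coeff i).smulRight (coeff (4 * N - i)) +
    (coeff (2 * N)).smulRight (coeff (2 * N))

lemma modeForm_apply (f g : ℚ⟦X⟧) :
    modeForm N f g = ∑ i ∈ range (2 * N), 2 * (-1) ^ i * (coeff i f * coeff (4 * N - i) g) +
      coeff (2 * N) f * coeff (2 * N) g := by
  simp [modeForm]

lemma modeForm_self (f : ℚ⟦X⟧) : modeForm N f f = coeff (4 * N) (f * rescale (-1) f) := by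
  rw [modeForm_apply, coeff_mul, Nat.sum_antidiagonal_eq_sum_range_succ_mk,
    show (4 * N).succ = 2 * N + 1 + 2 * N by lia, sum_range_add, sum_range_succ _ (2 * N),
    ← sum_range_reflect (fun i => coeff (2 * N + 1 + i) f * _) (2 * N),
    add_right_comm (∑ i ∈ range _, _), ← sum_add_distrib]
  simp only [coeff_rescale]
  congr 1
  · refine sum_congr rfl fun i hi => ?_
    have hi := mem_range.1 hi
    have parity : (-1 : ℚ) ^ (4 * N - i) = (-1) ^ i := by
      rw [neg_one_pow_eq_pow_mod_two, neg_one_pow_eq_pow_mod_two (n := i)]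
      congr 1
      lia
    rw [show 2 * N + 1 + (2 * N - 1 - i) = 4 * N - i by lia,
      show 4 * N - (4 * N - i) = i by lia, parity]
    ring
  · rw [show 4 * N - 2 * N = 2 * N by lia, pow_mul]
    simp

lemma modeForm_eq_zero_of_pow_dvd {b c : ℕ} {f g : ℚ⟦X⟧} (hf : X ^ b ∣ f) (hg : X ^ c ∣ g)
    (h : 4 * N < b + c) : modeForm N f g = 0 := by
  rw [X_pow_dvd_iff] at hf hg
  have coeff_mul_coeff {i j : ℕ} (hij : i + j = 4 * N) : coeff i f * coeff j g = 0 := by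
    rcases lt_or_ge i b with hi | hi
    · rw [hf i hi, zero_mul]
    · rw [hg j (by lia), mul_zero]
  rw [modeForm_apply, coeff_mul_coeff (by lia), add_zero]
  refine sum_eq_zero fun i hi => ?_
  have := mem_range.1 hi
  rw [coeff_mul_coeff (by lia), mul_zero]

variable {N} in
lemma modeForm_eq_zero {f : ℚ⟦X⟧} (hf : X ^ (2 * N + 1) ∣ f) : modeForm N f = 0 := by
  rw [X_pow_dvd_iff] at hf
  refine LinearMap.ext fun g => ?_
  rw [modeForm_apply, hf _ (by lia), zero_mul, add_zero]
  refine sum_eq_zero fun i hi => ?_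
  have := mem_range.1 hi
  rw [hf _ (by lia), zero_mul, mul_zero]

/-- The Clifford algebra generated by the coefficients of a neutral fermion field, in which a power
series `f` stands for the mode sum of its coefficients and `X ^ (2 * N - m)` for the mode `φ m`. -/
abbrev ModeAlgebra : Type := CliffordAlgebra (modeForm N).toQuadraticMap

lemma polar_modeForm_X_mul (f : ℚ⟦X⟧) :
    QuadraticMap.polar (modeForm N).toQuadraticMap f (LinearMap.mulLeft ℚ X f) = 0 := by
  have sum_sub_sub : (f + X * f) * rescale (-1) (f + X * f) - f * rescale (-1) f
      - X * f * rescale (-1) (X * f) = 0 := by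
    simp only [map_add, map_mul, rescale_neg_one_X]
    ring
  simp only [QuadraticMap.polar, LinearMap.BilinMap.toQuadraticMap_apply, modeForm_self,
    LinearMap.mulLeft_apply]
  rw [← map_sub, ← map_sub, sum_sub_sub, map_zero]

/-- The derivation of the mode algebra that multiplies generators by `X`, hence lowers modes. -/
noncomputable def lowering : ModeAlgebra N →ₗ[ℚ] ModeAlgebra N :=
  derivationLift (LinearMap.mulLeft ℚ X) (polar_modeForm_X_mul N)

lemma lowering_ι (f : ℚ⟦X⟧) :
    lowering N (ι (modeForm N).toQuadraticMap f) = ι (modeForm N).toQuadraticMap (X * f) :=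
  derivationLift_ι ..

lemma lowering_one : lowering N 1 = 0 := derivationLift_one ..

lemma lowering_mul (x y : ModeAlgebra N) :
    lowering N (x * y) = lowering N x * y + x * lowering N y :=
  derivationLift_mul ..

/-- The mode `φ m` of the fermion field. The convention is meaningful for `m ≤ 2 * N`, as the
exponent is truncated. -/
noncomputable def mode (m : ℕ) : ModeAlgebra N :=
  ι (modeForm N).toQuadraticMap (X ^ (2 * N - m))

variable {N}

lemma lowering_mode {m : ℕ} (hm : 0 < m) (hmN : m ≤ 2 * N) :
    lowering N (mode N m) = mode N (m - 1) := by
  rw [mode, lowering_ι, ← pow_succ', mode, show 2 * N - m + 1 = 2 * N - (m - 1) by lia]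

lemma mode_mul_self {m : ℕ} (hm : m ≤ 2 * N) :
    mode N m * mode N m = if m = 0 then 1 else 0 := by
  rw [mode, ι_sq_scalar, LinearMap.BilinMap.toQuadraticMap_apply, modeForm_self, map_pow,
    rescale_neg_one_X, ← mul_pow, mul_neg, ← neg_one_mul, mul_pow, ← pow_two, ← pow_mul,
    show (-1 : ℚ⟦X⟧) = C (-1) by simp, ← map_pow, coeff_C_mul, coeff_X_pow]
  split_ifs
  · subst m
    simp
  · lia
  · lia
  · simp

variable (N) in
/-- The sum of the vacuum expectation and its composition with the mode `φ 0`, which makes it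
invariant under left multiplication by `φ 0`. -/
noncomputable def twistedVacuum : ModeAlgebra N →ₗ[ℚ] ℚ :=
  vacuum (modeForm N) + vacuum (modeForm N) ∘ₗ LinearMap.mulLeft ℚ (mode N 0)

lemma twistedVacuum_apply (x : ModeAlgebra N) :
    twistedVacuum N x = vacuum (modeForm N) x + vacuum (modeForm N) (mode N 0 * x) := rfl

lemma twistedVacuum_one : twistedVacuum N 1 = 1 := by
  rw [twistedVacuum_apply, vacuum_one, mode, vacuum_ι_mul]
  simp

lemma twistedVacuum_mode_zero_mul (x : ModeAlgebra N) :
    twistedVacuum N (mode N 0 * x) = twistedVacuum N x := by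
  rw [twistedVacuum_apply, twistedVacuum_apply, ← mul_assoc, mode_mul_self (Nat.zero_le _),
    if_pos rfl, one_mul, add_comm]

lemma vacuum_ι_mul_eq_zero {f : ℚ⟦X⟧} (hf : X ^ (2 * N + 1) ∣ f) (x : ModeAlgebra N) :
    vacuum (modeForm N) (ι _ f * x) = 0 := by
  simp [vacuum_ι_mul, modeForm_eq_zero hf]

lemma twistedVacuum_ι_mul_eq_zero {f : ℚ⟦X⟧} (hf : X ^ (2 * N + 1) ∣ f) (x : ModeAlgebra N) :
    twistedVacuum N (ι _ f * x) = 0 := by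
  have polar_eq_zero : QuadraticMap.polar (modeForm N).toQuadraticMap (X ^ (2 * N - 0)) f = 0 := by
    simp only [QuadraticMap.polar, LinearMap.BilinMap.toQuadraticMap_apply, map_add,
      LinearMap.add_apply, modeForm_eq_zero hf]
    rw [modeForm_eq_zero_of_pow_dvd N dvd_rfl hf (by lia)]
    simp
  have anticomm := ι_mul_ι_add_swap (Q := (modeForm N).toQuadraticMap) (X ^ (2 * N - 0)) f
  rw [polar_eq_zero, map_zero, add_eq_zero_iff_eq_neg] at anticomm
  rw [twistedVacuum_apply, mode, ← mul_assoc, anticomm, neg_mul, map_neg, mul_assoc,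
    vacuum_ι_mul_eq_zero hf, vacuum_ι_mul_eq_zero hf, neg_zero, add_zero]

variable (N) in
/-- The twisted vacuum expectation after `s` applications of the lowering derivation. -/
noncomputable def iteratedVacuum (s : ℕ) : ModeAlgebra N →ₗ[ℚ] ℚ :=
  twistedVacuum N ∘ₗ lowering N ^ s

lemma iteratedVacuum_zero (x : ModeAlgebra N) : iteratedVacuum N 0 x = twistedVacuum N x := rfl

lemma iteratedVacuum_succ (s : ℕ) (x : ModeAlgebra N) :
    iteratedVacuum N (s + 1) x = iteratedVacuum N s (lowering N x) := by
  simp [iteratedVacuum, pow_succ]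

lemma iteratedVacuum_ι_mul_eq_zero (s : ℕ) {f : ℚ⟦X⟧} (hf : X ^ (2 * N + 1) ∣ f)
    (x : ModeAlgebra N) : iteratedVacuum N s (ι _ f * x) = 0 := by
  induction s generalizing f x with
  | zero => exact twistedVacuum_ι_mul_eq_zero hf x
  | succ s ih =>
    rw [iteratedVacuum_succ, lowering_mul, map_add, lowering_ι, ih hf, ih (hf.mul_left _), add_zero]

lemma iteratedVacuum_mode_zero_mul (s : ℕ) (x : ModeAlgebra N) :
    iteratedVacuum N s (mode N 0 * x) = iteratedVacuum N s x := by
  induction s generalizing x with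
  | zero => exact twistedVacuum_mode_zero_mul x
  | succ s ih =>
    have lowering_killed : iteratedVacuum N s (lowering N (mode N 0) * x) = 0 := by
      rw [mode, lowering_ι]
      exact iteratedVacuum_ι_mul_eq_zero s (pow_succ' X (2 * N)).dvd x
    rw [iteratedVacuum_succ, lowering_mul, map_add, lowering_killed, ih, zero_add,
      iteratedVacuum_succ]

end ModeAlgebra

section Filtration

open CliffordAlgebra PowerSeries

variable {Q : QuadraticForm ℚ ℚ⟦X⟧} {N : ℕ}

/-- The filtration of a Clifford algebra on power series in which a generator divisible by `X ^ b`
has degree at most `2 * N - b`. -/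
inductive HasDegreeLE (Q : QuadraticForm ℚ ℚ⟦X⟧) (N : ℕ) : ℤ → CliffordAlgebra Q → Prop
  | zero {d : ℤ} : HasDegreeLE Q N d 0
  | one {d : ℤ} (hd : 0 ≤ d) : HasDegreeLE Q N d 1
  | ι_mul {b : ℕ} {f : ℚ⟦X⟧} {x : CliffordAlgebra Q} {d e : ℤ} (hf : X ^ b ∣ f)
      (hx : HasDegreeLE Q N d x) (he : d + (2 * N - b) ≤ e) : HasDegreeLE Q N e (ι Q f * x)
  | add {x y : CliffordAlgebra Q} {d : ℤ} (hx : HasDegreeLE Q N d x) (hy : HasDegreeLE Q N d y) :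
      HasDegreeLE Q N d (x + y)
  | smul {x : CliffordAlgebra Q} {d : ℤ} (c : ℚ) (hx : HasDegreeLE Q N d x) :
      HasDegreeLE Q N d (c • x)

namespace HasDegreeLE

lemma mono {x : CliffordAlgebra Q} {d e : ℤ} (hx : HasDegreeLE Q N d x) (hde : d ≤ e) :
    HasDegreeLE Q N e x := by
  induction hx with
  | zero => exact zero
  | one hd => exact one (hd.trans hde)
  | ι_mul hf hx he => exact hx.ι_mul hf (he.trans hde)
  | add _ _ ihx ihy => exact (ihx hde).add (ihy hde)
  | smul c _ ihx => exact (ihx hde).smul c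

lemma sub {x y : CliffordAlgebra Q} {d : ℤ} (hx : HasDegreeLE Q N d x)
    (hy : HasDegreeLE Q N d y) : HasDegreeLE Q N d (x - y) := by
  rw [sub_eq_add_neg, ← neg_one_smul ℚ y]
  exact hx.add (hy.smul _)

lemma contractLeft_modeForm {x : CliffordAlgebra Q} {b : ℕ} {d : ℤ} {f : ℚ⟦X⟧} (hf : X ^ b ∣ f)
    (hx : HasDegreeLE Q N d x) :
    HasDegreeLE Q N (d + (2 * N - b)) (contractLeft (modeForm N f) x) := by
  induction hx with
  | zero => simpa using zero
  | one => simpa using zero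
  | @ι_mul c g x d e hg hx he ihx =>
    rw [contractLeft_ι_mul]
    refine sub ?_ (ihx.ι_mul hg (by lia))
    by_cases h : 4 * N < b + c
    · rw [modeForm_eq_zero_of_pow_dvd N hf hg h, zero_smul]
      exact zero
    · exact (hx.mono (by lia)).smul _
  | add _ _ ihx ihy =>
    rw [map_add]
    exact ihx.add ihy
  | smul c _ ihx =>
    rw [map_smul]
    exact ihx.smul c

lemma changeForm_modeForm {Q' : QuadraticForm ℚ ℚ⟦X⟧}
    (hQ : (-modeForm N).toQuadraticMap = Q' - Q) {x : CliffordAlgebra Q} {d : ℤ}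
    (hx : HasDegreeLE Q N d x) : HasDegreeLE Q' N d (changeForm hQ x) := by
  induction hx with
  | zero => simpa using zero
  | one hd => simpa using one hd
  | @ι_mul c g x d e hg hx he ihx =>
    rw [changeForm_ι_mul]
    refine (ihx.ι_mul hg he).sub ?_
    rw [LinearMap.neg_apply, map_neg, LinearMap.neg_apply, ← neg_one_smul ℚ]
    exact ((ihx.contractLeft_modeForm hg).mono he).smul _
  | add _ _ ihx ihy =>
    rw [map_add]
    exact ihx.add ihy
  | smul c _ ihx =>
    rw [map_smul]
    exact ihx.smul c

lemma algebraMapInv_eq_zero {x : ExteriorAlgebra ℚ ℚ⟦X⟧} {d : ℤ} (hd : d < 0)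
    (hx : HasDegreeLE 0 N d x) : ExteriorAlgebra.algebraMapInv x = 0 := by
  induction hx with
  | zero => exact map_zero _
  | one h => exact absurd h hd.not_ge
  | ι_mul =>
    rw [map_mul]
    exact mul_eq_zero_of_left (ExteriorAlgebra.lift_ι_apply ..) _
  | add _ _ ihx ihy => rw [map_add, ihx hd, ihy hd, add_zero]
  | smul c _ ihx => rw [map_smul, ihx hd, smul_zero]

variable {x : ModeAlgebra N} {d : ℤ}

lemma vacuum_eq_zero (hd : d < 0) (hx : HasDegreeLE (modeForm N).toQuadraticMap N d x) :
    vacuum (modeForm N) x = 0 :=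
  (hx.changeForm_modeForm _).algebraMapInv_eq_zero hd

lemma lowering (hx : HasDegreeLE (modeForm N).toQuadraticMap N d x) :
    HasDegreeLE (modeForm N).toQuadraticMap N (d - 1) (lowering N x) := by
  induction hx with
  | zero => simpa using zero
  | one => simpa [lowering_one] using zero
  | ι_mul hf hx he ihx =>
    rw [lowering_mul, lowering_ι]
    have hXf := mul_dvd_mul_left X hf
    rw [← pow_succ'] at hXf
    exact (hx.ι_mul hXf (by push_cast; lia)).add (ihx.ι_mul hf (by lia))
  | add _ _ ihx ihy =>
    rw [map_add]
    exact ihx.add ihy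
  | smul c _ ihx =>
    rw [map_smul]
    exact ihx.smul c

lemma iteratedVacuum_eq_zero {s : ℕ} (hd : d < s)
    (hx : HasDegreeLE (modeForm N).toQuadraticMap N d x) : iteratedVacuum N s x = 0 := by
  induction s generalizing d x with
  | zero =>
    have mode_zero_mul : HasDegreeLE _ N d (mode N 0 * x) :=
      hx.ι_mul (b := 2 * N) (by simp) (by simp)
    rw [iteratedVacuum_zero, twistedVacuum_apply, hx.vacuum_eq_zero (by simpa using hd),
      mode_zero_mul.vacuum_eq_zero (by simpa using hd), add_zero]
  | succ s ih =>
    rw [iteratedVacuum_succ]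
    exact ih (by push_cast at hd; lia) hx.lowering

end HasDegreeLE

variable {a : ℕ → ℕ} {n : ℕ} {g : ℕ → ℚ⟦X⟧}

lemma hasDegreeLE_orderedProd_ι (haN : ∀ i < n, a i ≤ 2 * N) (f : ℕ → ℚ⟦X⟧)
    (hf : ∀ i < n, X ^ (2 * N - a i) ∣ f i) :
    HasDegreeLE Q N (∑ i ∈ range n, (a i : ℤ)) (orderedProd (fun i => ι Q (f i)) n) := by
  induction n generalizing a f with
  | zero => exact .one le_rfl
  | succ n ih =>
    rw [orderedProd_succ', sum_range_succ']
    refine (ih (fun i hi => haN _ (by lia)) _ fun i hi => hf _ (by lia)).ι_mul (hf 0 (by lia)) ?_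
    have := haN 0 (by lia)
    lia

lemma hasDegreeLE_orderedProd_sub (haN : ∀ i < n, a i ≤ 2 * N) (hg : ∀ i < n, X ∣ g i - 1) :
    HasDegreeLE (modeForm N).toQuadraticMap N (∑ i ∈ range n, (a i : ℤ) - 1)
      (orderedProd (fun i => ι _ (X ^ (2 * N - a i) * g i)) n -
        orderedProd (fun i => mode N (a i)) n) := by
  induction n generalizing a g with
  | zero => simpa [orderedProd_zero] using .zero
  | succ n ih =>
    have haN' i (hi : i < n) := haN (i + 1) (by lia)
    have hg' i (hi : i < n) := hg (i + 1) (by lia)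
    have sub_dvd : X ^ (2 * N - a 0 + 1) ∣ X ^ (2 * N - a 0) * g 0 - X ^ (2 * N - a 0) := by
      rw [pow_succ, ← mul_sub_one]
      exact mul_dvd_mul_left _ (hg 0 (by lia))
    have telescope (u u' x x' : ModeAlgebra N) :
        u * x - u' * x' = (u - u') * x + u' * (x - x') := by
      noncomm_ring
    rw [orderedProd_succ', orderedProd_succ', telescope, mode, ← map_sub, sum_range_succ']
    refine .add (.ι_mul sub_dvd (hasDegreeLE_orderedProd_ι haN' _ fun i _ => dvd_mul_right ..) ?_)
      (.ι_mul dvd_rfl (ih haN' hg') ?_)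
    all_goals
      have := haN 0 (by lia)
      lia

end Filtration

section FermionMonomials

open CliffordAlgebra PowerSeries

variable {N : ℕ}

lemma update_pred_mode {a : ℕ → ℕ} {i : ℕ} (hi : 0 < a i) (hiN : a i ≤ 2 * N) :
    Function.update (fun j => mode N (a j)) i (lowering N (mode N (a i))) =
      fun j => mode N (Function.update a i (a i - 1) j) := by
  rw [lowering_mode hi hiN]
  exact (Function.comp_update (mode N) a i (a i - 1)).symm

lemma orderedProd_mode_eq_zero {a : ℕ → ℕ} {i n : ℕ} (hi : i + 1 < n) (h : a i = a (i + 1))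
    (hpos : 0 < a i) (hiN : a i ≤ 2 * N) : orderedProd (fun j => mode N (a j)) n = 0 := by
  refine orderedProd_eq_zero hi ?_
  rw [← h, mode_mul_self hiN, if_neg hpos.ne']

lemma iteratedVacuum_succ_orderedProd_mode {a : ℕ → ℕ} {n s : ℕ} (hpos : ∀ i < n, 0 < a i)
    (haN : ∀ i < n, a i ≤ 2 * N) (ha : Set.InjOn a (Set.Iio n))
    (hsum : ∑ i ∈ range n, a i = s + 1)
    (ih : ∀ i < n, iteratedVacuum N s
      (orderedProd (fun j => mode N (Function.update a i (a i - 1) j)) n) =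
        s.factorial * thrallProduct (Function.update a i (a i - 1)) n) :
    iteratedVacuum N (s + 1) (orderedProd (fun i => mode N (a i)) n) =
      (s + 1).factorial * thrallProduct a n := by
  calc iteratedVacuum N (s + 1) (orderedProd (fun i => mode N (a i)) n)
    _ = ∑ i ∈ range n, iteratedVacuum N s
          (orderedProd (fun j => mode N (Function.update a i (a i - 1) j)) n) := by
      rw [iteratedVacuum_succ, lowering, derivationLift_orderedProd, map_sum]
      refine sum_congr rfl fun i hi => ?_
      have hi := mem_range.1 hi
      rw [← update_pred_mode (hpos i hi) (haN i hi), lowering]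
    _ = s.factorial * ∑ i ∈ range n, thrallProduct (Function.update a i (a i - 1)) n := by
      rw [mul_sum]
      exact sum_congr rfl fun i hi => ih i (mem_range.1 hi)
    _ = (s + 1).factorial * thrallProduct a n := by
      rw [sum_thrallProduct_update_pred hpos ha, hsum, Nat.factorial_succ]
      push_cast
      ring

lemma sum_update_pred {a : ℕ → ℕ} {i n s : ℕ} (hi : i < n) (hpos : 0 < a i)
    (hsum : ∑ j ∈ range n, a j = s + 1) :
    ∑ j ∈ range n, Function.update a i (a i - 1) j = s := by
  have add_erase := add_sum_erase (range n) a (mem_range.2 hi)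
  rw [Finset.erase_eq] at add_erase
  rw [sum_update_of_mem (mem_range.2 hi)]
  lia

/- Lowering a strictly increasing sequence keeps it weakly increasing. Then both sides vanish if two
neighbours agree, and a leading zero may be dropped. -/
lemma iteratedVacuum_orderedProd_mode_of_strict {s : ℕ}
    (strict : ∀ (n : ℕ) (a : ℕ → ℕ), (∀ i < n, 0 < a i) → (∀ i, i + 1 < n → a i < a (i + 1)) →
      (∀ i < n, a i ≤ 2 * N) → ∑ i ∈ range n, a i = s →
      iteratedVacuum N s (orderedProd (fun i => mode N (a i)) n) =
        s.factorial * thrallProduct a n)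
    {n : ℕ} {a : ℕ → ℕ} (hpos : ∀ i, i + 1 < n → 0 < a (i + 1))
    (hle : ∀ i, i + 1 < n → a i ≤ a (i + 1)) (haN : ∀ i < n, a i ≤ 2 * N)
    (hsum : ∑ i ∈ range n, a i = s) :
    iteratedVacuum N s (orderedProd (fun i => mode N (a i)) n) =
      s.factorial * thrallProduct a n := by
  by_cases neighbours : ∃ i, i + 1 < n ∧ a i = a (i + 1)
  · obtain ⟨i, hi, heq⟩ := neighbours
    rw [orderedProd_mode_eq_zero hi heq (heq ▸ hpos i hi) (haN i (by lia)),
      thrallProduct_eq_zero i.lt_succ_self hi heq.symm, map_zero, mul_zero]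
  have hlt (i : ℕ) (hi : i + 1 < n) : a i < a (i + 1) :=
    (hle i hi).lt_of_ne fun heq => neighbours ⟨i, hi, heq⟩
  rcases n with _ | n
  · exact strict 0 a (by simp) (by simp) haN hsum
  rcases (a 0).eq_zero_or_pos with h0 | h0
  · rw [orderedProd_succ', h0, iteratedVacuum_mode_zero_mul,
      thrallProduct_succ_of_zero h0 fun i hi => hpos i (by lia)]
    rw [sum_range_succ', h0, add_zero] at hsum
    exact strict n (fun i => a (i + 1)) (fun i hi => hpos i (by lia))
      (fun i hi => hlt (i + 1) (by lia)) (fun i hi => haN (i + 1) (by lia)) hsum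
  · refine strict (n + 1) a (fun i hi => ?_) hlt haN hsum
    rcases i with _ | i
    exacts [h0, hpos i hi]

lemma iteratedVacuum_orderedProd_mode {n s : ℕ} {a : ℕ → ℕ} (hpos : ∀ i, i + 1 < n → 0 < a (i + 1))
    (hle : ∀ i, i + 1 < n → a i ≤ a (i + 1)) (haN : ∀ i < n, a i ≤ 2 * N)
    (hsum : ∑ i ∈ range n, a i = s) :
    iteratedVacuum N s (orderedProd (fun i => mode N (a i)) n) =
      s.factorial * thrallProduct a n := by
  induction s generalizing n a with
  | zero =>
    refine iteratedVacuum_orderedProd_mode_of_strict (fun n a hpos _ _ hsum => ?_) hpos hle haN hsum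
    obtain rfl : n = 0 := by
      by_contra hn
      exact (sum_pos (fun i hi => hpos i (mem_range.1 hi)) (by simpa using hn)).ne' hsum
    simp [orderedProd_zero, iteratedVacuum_zero, twistedVacuum_one, thrallProduct]
  | succ s ih =>
    refine iteratedVacuum_orderedProd_mode_of_strict (fun n a hpos hlt haN hsum => ?_)
      hpos hle haN hsum
    have ha : StrictMonoOn a (Set.Iio n) :=
      strictMonoOn_of_lt_add_one Set.ordConnected_Iio fun i _ _ hi => hlt i hi
    refine iteratedVacuum_succ_orderedProd_mode hpos haN ha.injOn hsum fun i hi => ?_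
    refine ih (fun j hj => ?_) (fun j hj => ?_) (fun j hj => ?_)
      (sum_update_pred hi (hpos i hi) hsum) <;> grind

theorem iteratedVacuum_orderedProd_ι {n : ℕ} {a : ℕ → ℕ} {g : ℕ → ℚ⟦X⟧} (hpos : ∀ i < n, 0 < a i)
    (ha : MonotoneOn a (Set.Iio n)) (haN : ∀ i < n, a i ≤ 2 * N) (hg : ∀ i < n, X ∣ g i - 1) :
    iteratedVacuum N (∑ i ∈ range n, a i)
        (orderedProd (fun i => ι _ (X ^ (2 * N - a i) * g i)) n) =
      (∑ i ∈ range n, a i).factorial * thrallProduct a n := by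
  have tail_eq_zero := (hasDegreeLE_orderedProd_sub haN hg).iteratedVacuum_eq_zero
    (s := ∑ i ∈ range n, a i) (by push_cast; lia)
  rw [map_sub, sub_eq_zero] at tail_eq_zero
  rw [tail_eq_zero]
  exact iteratedVacuum_orderedProd_mode (fun i hi => hpos _ hi)
    (fun i hi => ha (Set.mem_Iio.2 (by lia)) hi i.le_succ) haN rfl

end FermionMonomials

section SignedPermutations

/-- The odd permutations of `ℤ`, a group containing every `Bₙ`. -/
def SignedPerm : Subgroup (Equiv.Perm ℤ) where
  carrier := {w | ∀ x, w (-x) = -w x}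
  mul_mem' {v w} hv hw x := by simp [hw x, hv (w x)]
  one_mem' := by simp
  inv_mem' {w} hw x := by
    rw [Equiv.Perm.inv_eq_iff_eq, hw]
    simp

lemma signedPerm_neg (w : SignedPerm) (x : ℤ) : w.1 (-x) = -w.1 x := w.2 x

lemma signedPerm_zero (w : SignedPerm) : w.1 0 = 0 := by
  have := signedPerm_neg w 0
  rw [neg_zero] at this
  lia

lemma signedPerm_inj (w : SignedPerm) {x y : ℤ} : w.1 x = w.1 y ↔ x = y := w.1.injective.eq_iff

lemma sB_zero_apply (x : ℤ) : sB 0 x = if x = 1 then -1 else if x = -1 then 1 else x := by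
  simp [sB, Equiv.swap_apply_def]

lemma sB_apply {k : ℕ} (hk : 0 < k) (x : ℤ) :
    sB k x = if x = k then (k : ℤ) + 1 else if x = k + 1 then (k : ℤ)
      else if x = -k then -(k + 1 : ℤ) else if x = -(k + 1) then -(k : ℤ) else x := by
  simp only [sB, if_neg hk.ne', Equiv.Perm.mul_apply, Equiv.swap_apply_def]
  split_ifs <;> lia

lemma sB_neg (i : ℕ) (x : ℤ) : sB i (-x) = -sB i x := by
  rcases i.eq_zero_or_pos with rfl | h
  · grind [sB_zero_apply]
  · grind [sB_apply]

/-- The generator `sB i` as a signed permutation. -/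
def simpleRefl (i : ℕ) : SignedPerm := ⟨sB i, sB_neg i⟩

lemma mul_simpleRefl_apply (w : SignedPerm) (i : ℕ) (x : ℤ) :
    (w * simpleRefl i).1 x = w.1 (sB i x) := rfl

lemma simpleRefl_mul_self (i : ℕ) : simpleRefl i * simpleRefl i = 1 := by
  ext x
  change sB i (sB i x) = x
  rcases i.eq_zero_or_pos with rfl | h
  · grind [sB_zero_apply]
  · grind [sB_apply]

lemma mul_simpleRefl_mul_simpleRefl (w : SignedPerm) (i : ℕ) :
    w * simpleRefl i * simpleRefl i = w := by
  rw [mul_assoc, simpleRefl_mul_self, mul_one]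

lemma simpleRefl_inv (i : ℕ) : (simpleRefl i)⁻¹ = simpleRefl i :=
  inv_eq_of_mul_eq_one_left (simpleRefl_mul_self i)

/-- The pairs of words identified by a braid relation of type `B`. -/
inductive BraidPair : List ℕ → List ℕ → Prop
  | comm {i j : ℕ} (hij : i + 1 < j) : BraidPair [i, j] [j, i]
  | braid {k : ℕ} (hk : 0 < k) : BraidPair [k, k + 1, k] [k + 1, k, k + 1]
  | braid_zero : BraidPair [0, 1, 0, 1] [1, 0, 1, 0]

lemma prod_map_simpleRefl_eq {p q : List ℕ} (h : BraidPair p q) :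
    (p.map simpleRefl).prod = (q.map simpleRefl).prod := by
  ext x
  rcases h with hij | hk | _
  all_goals simp only [List.map_cons, List.map_nil, List.prod_cons, List.prod_nil, mul_one]
  · rename_i i j
    change sB i (sB j x) = sB j (sB i x)
    rcases i.eq_zero_or_pos with rfl | hi
    · grind (splits := 40) [sB_zero_apply, sB_apply]
    · grind (splits := 40) [sB_apply]
  · rename_i k
    change sB k (sB (k + 1) (sB k x)) = sB (k + 1) (sB k (sB (k + 1) x))
    grind (splits := 40) [sB_apply]
  · change sB 0 (sB 1 (sB 0 (sB 1 x))) = sB 1 (sB 0 (sB 1 (sB 0 x)))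
    grind (splits := 40) [sB_zero_apply, sB_apply]

end SignedPermutations

section RootValues

/-- The value at `(w 1, w 2, …)` of the simple root `2 * x₁` or `xᵢ₊₁ - xᵢ` of type `C`. It is
negative if and only if `i` is a right descent of `w`. -/
def rootValue (i : ℕ) (w : SignedPerm) : ℤ := if i = 0 then 2 * w.1 1 else w.1 (i + 1) - w.1 i

lemma rootValue_zero (w : SignedPerm) : rootValue 0 w = 2 * w.1 1 := rfl

lemma rootValue_of_pos {i : ℕ} (hi : 0 < i) (w : SignedPerm) :
    rootValue i w = w.1 (i + 1) - w.1 i := if_neg hi.ne'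

lemma rootValue_ne_zero (i : ℕ) (w : SignedPerm) : rootValue i w ≠ 0 := by
  rcases i.eq_zero_or_pos with rfl | hi
  · have := signedPerm_inj w (x := 1) (y := 0)
    rw [rootValue_zero]
    grind [signedPerm_zero]
  · rw [rootValue_of_pos hi, sub_ne_zero, Ne, signedPerm_inj]
    lia

lemma rootValue_mul_simpleRefl_self (i : ℕ) (w : SignedPerm) :
    rootValue i (w * simpleRefl i) = -rootValue i w := by
  rcases i.eq_zero_or_pos with rfl | hi
  · rw [rootValue_zero, rootValue_zero, mul_simpleRefl_apply, sB_zero_apply, if_pos rfl,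
      signedPerm_neg, mul_neg]
  · simp only [rootValue_of_pos hi, mul_simpleRefl_apply, sB_apply hi]
    grind

lemma rootValue_mul_simpleRefl_of_lt {i j : ℕ} (h : i + 1 < j) (w : SignedPerm) :
    rootValue i (w * simpleRefl j) = rootValue i w := by
  rcases i.eq_zero_or_pos with rfl | hi
  · simp only [rootValue_zero, mul_simpleRefl_apply, sB_apply (by lia : 0 < j)]
    grind
  · simp only [rootValue_of_pos hi, mul_simpleRefl_apply, sB_apply (by lia : 0 < j)]
    grind

lemma rootValue_mul_simpleRefl_of_gt {i j : ℕ} (h : i + 1 < j) (w : SignedPerm) :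
    rootValue j (w * simpleRefl i) = rootValue j w := by
  simp only [rootValue_of_pos (by lia : 0 < j), mul_simpleRefl_apply]
  rcases i.eq_zero_or_pos with rfl | hi
  · grind [sB_zero_apply]
  · grind [sB_apply]

lemma rootValue_succ_mul_simpleRefl (k : ℕ) (w : SignedPerm) :
    rootValue (k + 1) (w * simpleRefl k) = rootValue (k + 1) w + rootValue k w := by
  rw [rootValue_of_pos k.succ_pos, rootValue_of_pos k.succ_pos]
  rcases k.eq_zero_or_pos with rfl | hk
  · grind [rootValue_zero, mul_simpleRefl_apply, sB_zero_apply, signedPerm_neg]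
  · grind [rootValue_of_pos hk, mul_simpleRefl_apply, sB_apply]

lemma rootValue_mul_simpleRefl_succ {k : ℕ} (hk : 0 < k) (w : SignedPerm) :
    rootValue k (w * simpleRefl (k + 1)) = rootValue k w + rootValue (k + 1) w := by
  grind [rootValue_of_pos, mul_simpleRefl_apply, sB_apply]

lemma rootValue_zero_mul_simpleRefl_one (w : SignedPerm) :
    rootValue 0 (w * simpleRefl 1) = rootValue 0 w + 2 * rootValue 1 w := by
  grind [rootValue_zero, rootValue_of_pos, mul_simpleRefl_apply, sB_apply]

end RootValues

section DividedDifferences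

/-- The divided difference operator `∂ᵢ` of type `C`. A function on `SignedPerm` stands for a
polynomial through its values at the points `(w 1, w 2, …)`. -/
noncomputable def dividedDiff (i : ℕ) : Module.End ℚ (SignedPerm → ℚ) where
  toFun f w := (f w - f (w * simpleRefl i)) / rootValue i w
  map_add' f g := by
    ext w
    simp only [Pi.add_apply]
    ring
  map_smul' c f := by
    ext w
    simp only [Pi.smul_apply, smul_eq_mul, RingHom.id_apply]
    ring

lemma dividedDiff_apply (i : ℕ) (f : SignedPerm → ℚ) (w : SignedPerm) :
    dividedDiff i f w = (f w - f (w * simpleRefl i)) / rootValue i w := rfl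

lemma rootValue_cast_ne_zero (i : ℕ) (w : SignedPerm) : (rootValue i w : ℚ) ≠ 0 :=
  Int.cast_ne_zero.2 (rootValue_ne_zero i w)

lemma dividedDiff_mul_self (i : ℕ) : dividedDiff i * dividedDiff i = 0 := by
  ext f w
  simp only [Module.End.mul_apply, dividedDiff_apply, mul_simpleRefl_mul_simpleRefl,
    rootValue_mul_simpleRefl_self, LinearMap.zero_apply, Pi.zero_apply]
  push_cast
  ring

lemma dividedDiff_comm {i j : ℕ} (h : i + 1 < j) :
    dividedDiff i * dividedDiff j = dividedDiff j * dividedDiff i := by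
  ext f w
  have comm : w * simpleRefl i * simpleRefl j = w * simpleRefl j * simpleRefl i := by
    simpa [mul_assoc] using congrArg (w * ·) (prod_map_simpleRefl_eq (.comm h))
  simp only [Module.End.mul_apply, dividedDiff_apply, rootValue_mul_simpleRefl_of_lt h,
    rootValue_mul_simpleRefl_of_gt h, comm]
  ring

lemma dividedDiff_braid {k : ℕ} (hk : 0 < k) :
    dividedDiff k * dividedDiff (k + 1) * dividedDiff k =
      dividedDiff (k + 1) * dividedDiff k * dividedDiff (k + 1) := by
  ext f w
  have braid : w * simpleRefl k * simpleRefl (k + 1) * simpleRefl k =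
      w * simpleRefl (k + 1) * simpleRefl k * simpleRefl (k + 1) := by
    simpa [mul_assoc] using congrArg (w * ·) (prod_map_simpleRefl_eq (.braid hk))
  have root₁ := rootValue_cast_ne_zero k w
  have root₂ := rootValue_cast_ne_zero (k + 1) w
  have root₁₂ := rootValue_cast_ne_zero k (w * simpleRefl (k + 1))
  simp only [Module.End.mul_apply, dividedDiff_apply, mul_simpleRefl_mul_simpleRefl, braid,
    rootValue_mul_simpleRefl_self, rootValue_succ_mul_simpleRefl,
    rootValue_mul_simpleRefl_succ hk] at root₁₂ ⊢
  push_cast at root₁₂ ⊢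
  generalize (rootValue k w : ℚ) = a at *
  generalize (rootValue (k + 1) w : ℚ) = b at *
  rw [neg_add_cancel_comm_assoc, neg_add_cancel_comm_assoc, add_comm b a]
  field_simp
  ring

lemma dividedDiff_braid_zero :
    dividedDiff 0 * dividedDiff 1 * dividedDiff 0 * dividedDiff 1 =
      dividedDiff 1 * dividedDiff 0 * dividedDiff 1 * dividedDiff 0 := by
  ext f w
  have braid : w * simpleRefl 0 * simpleRefl 1 * simpleRefl 0 * simpleRefl 1 =
      w * simpleRefl 1 * simpleRefl 0 * simpleRefl 1 * simpleRefl 0 := by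
    simpa [mul_assoc] using congrArg (w * ·) (prod_map_simpleRefl_eq .braid_zero)
  have root₀ := rootValue_cast_ne_zero 0 w
  have root₁ := rootValue_cast_ne_zero 1 w
  have root₀₁ := rootValue_cast_ne_zero 1 (w * simpleRefl 0)
  have root₁₀ := rootValue_cast_ne_zero 0 (w * simpleRefl 1)
  have succ (w : SignedPerm) : rootValue 1 (w * simpleRefl 0) = rootValue 1 w + rootValue 0 w :=
    rootValue_succ_mul_simpleRefl 0 w
  simp only [Module.End.mul_apply, dividedDiff_apply, mul_simpleRefl_mul_simpleRefl, braid,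
    rootValue_mul_simpleRefl_self, succ,
    rootValue_zero_mul_simpleRefl_one] at root₀₁ root₁₀ ⊢
  push_cast at root₀₁ root₁₀ ⊢
  generalize (rootValue 0 w : ℚ) = a at *
  generalize (rootValue 1 w : ℚ) = b at *
  rw [show -a + 2 * (b + a) = a + 2 * b by ring, show -(b + a) + (a + 2 * b) = b by ring,
    show -b + (a + 2 * b) = b + a by ring, show -(a + 2 * b) + 2 * (b + a) = a by ring]
  generalize hc : b + a = c at *
  generalize hd : a + 2 * b = d at *
  field_simp
  subst hc hd
  ring

lemma prod_map_dividedDiff_eq {p q : List ℕ} (h : BraidPair p q) :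
    (p.map dividedDiff).prod = (q.map dividedDiff).prod := by
  rcases h with hij | hk | _
  · simpa using dividedDiff_comm hij
  · simpa [mul_assoc] using dividedDiff_braid hk
  · simpa [mul_assoc] using dividedDiff_braid_zero

end DividedDifferences

section Length

/-- The positive roots `e_y - e_x` of `Bₙ`, recorded as the pairs `(x, y)`, where `e_{-x} = -e_x`
and the pair `(-y, y)` stands for the root in the direction `e_y`. -/
noncomputable def posRoots (n : ℕ) : Finset (ℤ × ℤ) :=
  {p ∈ Icc (-n : ℤ) n ×ˢ Icc (1 : ℤ) n | -p.2 ≤ p.1 ∧ p.1 < p.2 ∧ p.1 ≠ 0}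

lemma mem_posRoots {n : ℕ} {p : ℤ × ℤ} :
    p ∈ posRoots n ↔ -p.2 ≤ p.1 ∧ p.1 < p.2 ∧ p.1 ≠ 0 ∧ p.2 ≤ n := by
  simp only [posRoots, mem_filter, mem_product, mem_Icc]
  lia

lemma card_posRoots (n : ℕ) : #(posRoots n) = n ^ 2 := by
  induction n with
  | zero => rfl
  | succ n ih =>
    have union : posRoots (n + 1) =
        posRoots n ∪ ((Ico (-(n + 1) : ℤ) (n + 1)).erase 0) ×ˢ {(n + 1 : ℤ)} := by
      ext ⟨x, y⟩
      simp only [mem_posRoots, mem_union, mem_product, mem_erase, mem_Ico, mem_singleton]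
      lia
    have disj : Disjoint (posRoots n) (((Ico (-(n + 1) : ℤ) (n + 1)).erase 0) ×ˢ {(n + 1 : ℤ)}) :=
      disjoint_left.2 fun p hp => by
        rw [mem_posRoots] at hp
        simp only [mem_product, mem_singleton]
        lia
    have card_Ico : #(Ico (-(n + 1) : ℤ) (n + 1)) = 2 * n + 2 := by
      rw [Int.card_Ico]
      lia
    rw [union, card_union_of_disjoint disj, ih, card_product, card_singleton,
      card_erase_of_mem (by rw [mem_Ico]; lia), card_Ico]
    ring_nf
    lia

/-- The positive roots that `w` makes negative. -/
noncomputable def inversions (n : ℕ) (w : SignedPerm) : Finset (ℤ × ℤ) :=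
  {p ∈ posRoots n | w.1 p.2 < w.1 p.1}

/-- The Coxeter length of an element of `Bₙ`, as the number of its inversions. -/
noncomputable def signedLength (n : ℕ) (w : SignedPerm) : ℕ := #(inversions n w)

/-- The simple root of the generator `simpleRefl i`. -/
def simpleRoot (i : ℕ) : ℤ × ℤ := if i = 0 then (-1, 1) else (i, i + 1)

/-- The permutation of the positive roots other than `simpleRoot i` induced by `simpleRefl i`. The
reflection sends the pair `(-i, i + 1)` to `(-(i + 1), i)`, which encodes the same root. -/
def reflectRoot (i : ℕ) (p : ℤ × ℤ) : ℤ × ℤ :=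
  if p = (-(i : ℤ), (i : ℤ) + 1) then p else (sB i p.1, sB i p.2)

lemma reflectRoot_reflectRoot {n i : ℕ} {p : ℤ × ℤ} (hp : p ∈ posRoots n) :
    reflectRoot i (reflectRoot i p) = p := by
  rw [mem_posRoots] at hp
  have sB_sB (x : ℤ) : sB i (sB i x) = x :=
    congrArg (fun w : SignedPerm => w.1 x) (simpleRefl_mul_self i)
  by_cases h : p = (-(i : ℤ), (i : ℤ) + 1)
  · rw [reflectRoot, reflectRoot, if_pos h, if_pos h]
  · have h' : (sB i p.1, sB i p.2) ≠ (-(i : ℤ), (i : ℤ) + 1) := by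
      rintro h'
      rw [Prod.mk.injEq] at h'
      rcases i.eq_zero_or_pos with rfl | hi
      · grind [sB_zero_apply]
      · grind [sB_apply]
    rw [reflectRoot, reflectRoot, if_neg h, if_neg h', sB_sB, sB_sB]

lemma reflectRoot_mem {n i : ℕ} (hi : i < n) {p : ℤ × ℤ}
    (hp : p ∈ (posRoots n).erase (simpleRoot i)) :
    reflectRoot i p ∈ (posRoots n).erase (simpleRoot i) := by
  obtain ⟨x, y⟩ := p
  rw [mem_erase, mem_posRoots] at hp ⊢
  rcases i.eq_zero_or_pos with rfl | hi
  · simp only [simpleRoot, reflectRoot, Nat.cast_zero, neg_zero, zero_add] at hp ⊢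
    grind (splits := 40) [sB_zero_apply]
  · grind (splits := 40) [simpleRoot, reflectRoot, sB_apply]

lemma apply_reflectRoot_lt_iff (w : SignedPerm) (i : ℕ) {p : ℤ × ℤ} (hp : p.1 ≠ 0) :
    w.1 (reflectRoot i p).2 < w.1 (reflectRoot i p).1 ↔
      (w * simpleRefl i).1 p.2 < (w * simpleRefl i).1 p.1 := by
  rw [reflectRoot]
  split_ifs with h
  · subst h
    have hi : 0 < i := by
      rw [neg_ne_zero] at hp
      lia
    simp only [mul_simpleRefl_apply, signedPerm_neg]
    rw [sB_apply hi, sB_apply hi]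
    grind [signedPerm_neg]
  · rfl

lemma simpleRoot_mem_inversions {n i : ℕ} (hi : i < n) {w : SignedPerm} :
    simpleRoot i ∈ inversions n w ↔ rootValue i w < 0 := by
  rw [inversions, mem_filter, mem_posRoots, simpleRoot]
  rcases i.eq_zero_or_pos with rfl | h
  · rw [rootValue_zero, if_pos rfl, signedPerm_neg]
    lia
  · rw [rootValue_of_pos h, if_neg h.ne']
    lia

lemma card_inversions_mul_simpleRefl_erase {n i : ℕ} (hi : i < n) (w : SignedPerm) :
    #((inversions n (w * simpleRefl i)).erase (simpleRoot i)) =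
      #((inversions n w).erase (simpleRoot i)) := by
  simp only [inversions, ← filter_erase]
  have ne_zero {p : ℤ × ℤ} (hp : p ∈ (posRoots n).erase (simpleRoot i)) : p.1 ≠ 0 :=
    (mem_posRoots.1 (mem_of_mem_erase hp)).2.2.1
  refine card_nbij' (reflectRoot i) (reflectRoot i) (fun p hp => ?_) (fun p hp => ?_)
    (fun p hp => ?_) (fun p hp => ?_) <;> rw [coe_filter] at hp
  · exact mem_filter.2 ⟨reflectRoot_mem hi hp.1,
      (apply_reflectRoot_lt_iff w i (ne_zero hp.1)).2 hp.2⟩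
  · refine mem_filter.2 ⟨reflectRoot_mem hi hp.1,
      (apply_reflectRoot_lt_iff _ i (ne_zero hp.1)).2 ?_⟩
    rw [mul_simpleRefl_mul_simpleRefl]
    exact hp.2
  all_goals exact reflectRoot_reflectRoot (mem_of_mem_erase hp.1)

lemma signedLength_mul_simpleRefl_of_pos {n i : ℕ} (hi : i < n) {w : SignedPerm}
    (hw : 0 < rootValue i w) : signedLength n (w * simpleRefl i) = signedLength n w + 1 := by
  have mem : simpleRoot i ∈ inversions n (w * simpleRefl i) := by
    rw [simpleRoot_mem_inversions hi, rootValue_mul_simpleRefl_self]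
    lia
  have not_mem : simpleRoot i ∉ inversions n w := by
    rw [simpleRoot_mem_inversions hi]
    exact hw.not_gt
  rw [signedLength, ← card_erase_add_one mem, card_inversions_mul_simpleRefl_erase hi,
    erase_eq_of_notMem not_mem, signedLength]

lemma signedLength_mul_simpleRefl_of_neg {n i : ℕ} (hi : i < n) {w : SignedPerm}
    (hw : rootValue i w < 0) : signedLength n (w * simpleRefl i) + 1 = signedLength n w := by
  rw [← signedLength_mul_simpleRefl_of_pos hi (by rw [rootValue_mul_simpleRefl_self]; lia),
    mul_simpleRefl_mul_simpleRefl]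

lemma signedLength_mul_simpleRefl_le {n i : ℕ} (hi : i < n) (w : SignedPerm) :
    signedLength n (w * simpleRefl i) ≤ signedLength n w + 1 := by
  rcases (rootValue_ne_zero i w).lt_or_gt with h | h
  · have := signedLength_mul_simpleRefl_of_neg hi h
    lia
  · exact (signedLength_mul_simpleRefl_of_pos hi h).le

lemma signedLength_one (n : ℕ) : signedLength n 1 = 0 := by
  rw [signedLength, card_eq_zero, inversions, filter_eq_empty_iff]
  intro p hp
  exact (mem_posRoots.1 hp).2.1.le.not_gt

end Length

section FixesAbove

/-- The signed permutation `w` lies in `Bₙ`. -/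
def FixesAbove (n : ℕ) (w : SignedPerm) : Prop := ∀ x : ℤ, n < x → w.1 x = x

lemma fixesAbove_one (n : ℕ) : FixesAbove n 1 := fun _ _ => rfl

lemma FixesAbove.mul {n : ℕ} {v w : SignedPerm} (hv : FixesAbove n v) (hw : FixesAbove n w) :
    FixesAbove n (v * w) := fun x hx => by
  change v.1 (w.1 x) = x
  rw [hw x hx, hv x hx]

lemma fixesAbove_simpleRefl {n i : ℕ} (hi : i < n) : FixesAbove n (simpleRefl i) := fun x hx => by
  change sB i x = x
  rcases i.eq_zero_or_pos with rfl | h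
  · grind [sB_zero_apply]
  · grind [sB_apply]

lemma le_apply_of_strictMono {w : SignedPerm} (hw : StrictMono w.1) {x : ℤ} (hx : 0 ≤ x) :
    x ≤ w.1 x := by
  induction x, hx using Int.leInduction with
  | base => rw [signedPerm_zero]
  | succ x _ ih => exact ih.trans_lt (hw (lt_add_one x))

lemma eq_one_of_strictMono {w : SignedPerm} (hw : StrictMono w.1) : w = 1 := by
  have hinv : StrictMono (w⁻¹).1 := fun x y hxy => by
    refine hw.lt_iff_lt.1 ?_
    simpa using hxy
  have fixed {x : ℤ} (hx : 0 ≤ x) : w.1 x = x :=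
    le_antisymm (by simpa using hw.monotone (le_apply_of_strictMono hinv hx))
      (le_apply_of_strictMono hw hx)
  ext x
  change w.1 x = x
  rcases le_total 0 x with hx | hx
  · exact fixed hx
  · have := fixed (neg_nonneg.2 hx)
    rw [signedPerm_neg] at this
    exact neg_injective this

lemma eq_one_of_forall_rootValue_pos {n : ℕ} {w : SignedPerm} (hw : FixesAbove n w)
    (hpos : ∀ i < n, 0 < rootValue i w) : w = 1 := by
  have le_last : w.1 n ≤ n := by
    by_contra! h
    exact h.ne' (w.1.injective (hw _ h))
  have step_nonneg (k : ℕ) : w.1 k < w.1 (k + 1) := by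
    rcases lt_trichotomy k n with h | rfl | h
    · have := hpos k h
      rcases k.eq_zero_or_pos with rfl | hk
      · have := signedPerm_zero w
        grind [rootValue_zero]
      · rw [rootValue_of_pos hk] at this
        lia
    · rw [hw (k + 1) (by lia)]
      lia
    · rw [hw k (by lia), hw (k + 1) (by lia)]
      lia
  refine eq_one_of_strictMono (strictMono_int_of_lt_succ fun x => ?_)
  rcases le_or_gt 0 x with hx | hx
  · obtain ⟨k, rfl⟩ := Int.eq_ofNat_of_zero_le hx
    exact step_nonneg k
  · obtain ⟨k, hk⟩ := Int.eq_ofNat_of_zero_le (by lia : 0 ≤ -x - 1)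
    have := step_nonneg k
    rw [← hk, sub_add_cancel, show -x - 1 = -(x + 1) by ring, signedPerm_neg,
      signedPerm_neg] at this
    lia

end FixesAbove

section Longest

/-- The longest element of `Bₙ` as a signed permutation. -/
def longest (n : ℕ) : SignedPerm :=
  ⟨w0B n, fun x => by
    change w0BFun n (-x) = -w0BFun n x
    unfold w0BFun
    split_ifs <;> lia⟩

lemma longest_apply (n : ℕ) (x : ℤ) :
    (longest n).1 x = if -(n : ℤ) ≤ x ∧ x ≤ (n : ℤ) then -x else x := rfl

lemma longest_mul_self (n : ℕ) : longest n * longest n = 1 :=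
  Subtype.ext (Equiv.ext (w0BFun_involutive n))

lemma longest_inv (n : ℕ) : (longest n)⁻¹ = longest n :=
  inv_eq_of_mul_eq_one_left (longest_mul_self n)

lemma fixesAbove_longest (n : ℕ) : FixesAbove n (longest n) := fun x hx => by
  rw [longest_apply, if_neg (by lia)]

lemma simpleRefl_mul_longest {n i : ℕ} (hi : i < n) :
    simpleRefl i * longest n = longest n * simpleRefl i := by
  ext x
  change sB i ((longest n).1 x) = (longest n).1 (sB i x)
  rcases i.eq_zero_or_pos with rfl | h
  · grind [sB_zero_apply, longest_apply]
  · have := sB_apply h x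
    grind [sB_neg, longest_apply]

lemma signedLength_mul_longest (n : ℕ) (w : SignedPerm) :
    signedLength n (w * longest n) + signedLength n w = n ^ 2 := by
  have complement : inversions n (w * longest n) = {p ∈ posRoots n | ¬w.1 p.2 < w.1 p.1} := by
    refine filter_congr fun p hp => ?_
    change w.1 ((longest n).1 p.2) < w.1 ((longest n).1 p.1) ↔ _
    rw [mem_posRoots] at hp
    have := signedPerm_inj w (x := p.1) (y := p.2)
    rw [longest_apply, longest_apply, if_pos (by lia), if_pos (by lia), signedPerm_neg,
      signedPerm_neg]
    lia
  rw [signedLength, signedLength, complement, inversions, add_comm,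
    card_filter_add_card_filter_not, card_posRoots]

lemma signedLength_longest (n : ℕ) : signedLength n (longest n) = n ^ 2 := by
  simpa [signedLength_one] using signedLength_mul_longest n 1

lemma eq_longest_of_signedLength_eq {n : ℕ} {w : SignedPerm} (hw : FixesAbove n w)
    (hlen : signedLength n w = n ^ 2) : w = longest n := by
  have length_zero : signedLength n (w * longest n) = 0 := by
    have := signedLength_mul_longest n w
    lia
  rw [← longest_inv, ← mul_eq_one_iff_eq_inv]
  refine eq_one_of_forall_rootValue_pos (hw.mul (fixesAbove_longest n)) fun i hi => ?_
  by_contra! h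
  have := signedLength_mul_simpleRefl_of_neg hi (h.lt_of_ne (rootValue_ne_zero _ _))
  lia

end Longest

section ReducedWords

/-- The inverse of the product of the generators along a word. Prefixing a letter to the word then
multiplies by a generator on the right, the side on which `rootValue` detects descents. -/
def wordInv (l : List ℕ) : SignedPerm := ((l.map simpleRefl).prod)⁻¹

lemma wordInv_nil : wordInv [] = 1 := inv_one

lemma wordInv_append (p l : List ℕ) : wordInv (p ++ l) = wordInv l * wordInv p := by
  simp [wordInv]

lemma wordInv_cons (i : ℕ) (l : List ℕ) : wordInv (i :: l) = wordInv l * simpleRefl i := by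
  simp [wordInv, simpleRefl_inv]

lemma wordInv_eq_of_braidPair {p q : List ℕ} (h : BraidPair p q) : wordInv p = wordInv q :=
  congrArg (·⁻¹) (prod_map_simpleRefl_eq h)

lemma fixesAbove_wordInv {n : ℕ} {l : List ℕ} (hl : ∀ i ∈ l, i < n) : FixesAbove n (wordInv l) := by
  induction l with
  | nil => exact fixesAbove_one n
  | cons i l ih =>
    rw [List.forall_mem_cons] at hl
    rw [wordInv_cons]
    exact (ih hl.2).mul (fixesAbove_simpleRefl hl.1)

lemma signedLength_wordInv_le {n : ℕ} {l : List ℕ} (hl : ∀ i ∈ l, i < n) :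
    signedLength n (wordInv l) ≤ l.length := by
  induction l with
  | nil => exact (signedLength_one n).le
  | cons i l ih =>
    rw [List.forall_mem_cons] at hl
    rw [wordInv_cons, List.length_cons]
    exact (signedLength_mul_simpleRefl_le hl.1 _).trans (Nat.succ_le_succ (ih hl.2))

/-- The reduced words of `Bₙ`, characterized by the number of inversions of their product. -/
def IsReduced (n : ℕ) (l : List ℕ) : Prop :=
  (∀ i ∈ l, i < n) ∧ signedLength n (wordInv l) = l.length

lemma isReduced_cons {n i : ℕ} {l : List ℕ} :
    IsReduced n (i :: l) ↔ i < n ∧ IsReduced n l ∧ 0 < rootValue i (wordInv l) := by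
  simp only [IsReduced, List.forall_mem_cons, wordInv_cons, List.length_cons]
  constructor
  · rintro ⟨⟨hi, hl⟩, hlen⟩
    have := signedLength_wordInv_le hl
    have := signedLength_mul_simpleRefl_le hi (wordInv l)
    have hpos : 0 < rootValue i (wordInv l) := by
      by_contra! h
      have := signedLength_mul_simpleRefl_of_neg hi (h.lt_of_ne (rootValue_ne_zero _ _))
      lia
    exact ⟨hi, ⟨hl, by lia⟩, hpos⟩
  · rintro ⟨hi, ⟨hl, hlen⟩, hpos⟩
    exact ⟨⟨hi, hl⟩, by rw [signedLength_mul_simpleRefl_of_pos hi hpos, hlen]⟩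

lemma IsReduced.rootValue_neg {n i : ℕ} {l : List ℕ} (h : IsReduced n (i :: l)) :
    rootValue i (wordInv (i :: l)) < 0 := by
  rw [wordInv_cons, rootValue_mul_simpleRefl_self]
  exact neg_neg_of_pos (isReduced_cons.1 h).2.2

lemma exists_isReduced {n : ℕ} {w : SignedPerm} (hw : FixesAbove n w) :
    ∃ l, IsReduced n l ∧ wordInv l = w := by
  induction hm : signedLength n w using Nat.strong_induction_on generalizing w with
  | _ m ih =>
    by_cases h : ∀ i < n, 0 < rootValue i w
    · obtain rfl := eq_one_of_forall_rootValue_pos hw h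
      exact ⟨[], ⟨by simp, signedLength_one n⟩, wordInv_nil⟩
    · push Not at h
      obtain ⟨i, hi, hneg⟩ := h
      replace hneg := hneg.lt_of_ne (rootValue_ne_zero i w)
      have length := signedLength_mul_simpleRefl_of_neg hi hneg
      obtain ⟨l, hl, hlw⟩ := ih _ (by lia) (hw.mul (fixesAbove_simpleRefl hi)) rfl
      refine ⟨i :: l, isReduced_cons.2 ⟨hi, hl, ?_⟩, ?_⟩
      · rw [hlw, rootValue_mul_simpleRefl_self]
        lia
      · rw [wordInv_cons, hlw, mul_simpleRefl_mul_simpleRefl]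

/-- Multiplying `w` on the right by the letters of the word, one after the other, lowers the length
at each step. -/
def DescendsAlong : List ℕ → SignedPerm → Prop
  | [], _ => True
  | i :: l, w => rootValue i w < 0 ∧ DescendsAlong l (w * simpleRefl i)

lemma exists_isReduced_append {n : ℕ} {p : List ℕ} (hp : ∀ i ∈ p, i < n) {w : SignedPerm}
    (hw : FixesAbove n w) (h : DescendsAlong p w) :
    ∃ l, IsReduced n (p ++ l) ∧ wordInv (p ++ l) = w := by
  induction p generalizing w with
  | nil => exact exists_isReduced hw
  | cons i p ih =>
    rw [List.forall_mem_cons] at hp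
    obtain ⟨hneg, h⟩ := h
    obtain ⟨l, hl, hlw⟩ := ih hp.2 (hw.mul (fixesAbove_simpleRefl hp.1)) h
    simp only [List.cons_append]
    refine ⟨l, isReduced_cons.2 ⟨hp.1, hl, ?_⟩, ?_⟩
    · rw [hlw, rootValue_mul_simpleRefl_self]
      lia
    · rw [ wordInv_cons, hlw, mul_simpleRefl_mul_simpleRefl]

lemma exists_braidPair {i j : ℕ} (hij : i < j) {w : SignedPerm} (hi : rootValue i w < 0)
    (hj : rootValue j w < 0) :
    ∃ p q, BraidPair (i :: p) (j :: q) ∧ DescendsAlong (i :: p) w := by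
  rcases (Nat.succ_le_of_lt hij).lt_or_eq with h | rfl
  · exact ⟨[j], [i], .comm h, hi, by rwa [rootValue_mul_simpleRefl_of_gt h], trivial⟩
  · have succ (w : SignedPerm) := rootValue_succ_mul_simpleRefl i w
    have self := rootValue_mul_simpleRefl_self
    rcases i.eq_zero_or_pos with rfl | hpos
    · refine ⟨[1, 0, 1], [0, 1, 0], .braid_zero, hi, ?_, ?_, ?_, trivial⟩
      all_goals simp only [zero_add] at hj succ
      all_goals simp only [succ, self, rootValue_zero_mul_simpleRefl_one]
      all_goals lia
    · refine ⟨[i + 1, i], [i, i + 1], .braid hpos, hi, ?_, ?_, trivial⟩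
      all_goals simp only [succ, self, rootValue_mul_simpleRefl_succ hpos]
      all_goals lia

lemma BraidPair.length_eq {p q : List ℕ} (h : BraidPair p q) : p.length = q.length := by
  cases h <;> rfl

lemma BraidPair.mem_iff {p q : List ℕ} (h : BraidPair p q) (i : ℕ) : i ∈ p ↔ i ∈ q := by
  cases h <;> grind

lemma BraidPair.le_of_mem {i j k : ℕ} {p q : List ℕ} (h : BraidPair (i :: p) (j :: q))
    (hk : k ∈ i :: p) : k ≤ max i j := by
  cases h <;> grind

lemma exists_isReduced_braidPair {n i j : ℕ} {u v : List ℕ} (hij : i < j)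
    (hu : IsReduced n (i :: u)) (hv : IsReduced n (j :: v))
    (huv : wordInv (i :: u) = wordInv (j :: v)) :
    ∃ p q l, BraidPair (i :: p) (j :: q) ∧ IsReduced n (i :: (p ++ l)) ∧
      IsReduced n (j :: (q ++ l)) ∧ wordInv (i :: (p ++ l)) = wordInv (i :: u) ∧
      wordInv (j :: (q ++ l)) = wordInv (j :: v) := by
  obtain ⟨p, q, hpq, hp⟩ := exists_braidPair hij hu.rootValue_neg (huv ▸ hv.rootValue_neg)
  have hj := (isReduced_cons.1 hv).1
  obtain ⟨l, hl, hlu⟩ := exists_isReduced_append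
    (fun k hk => (hpq.le_of_mem hk).trans_lt (max_lt (hij.trans hj) hj))
    (fixesAbove_wordInv hu.1) hp
  have wordInv_eq : wordInv (j :: q ++ l) = wordInv (i :: p ++ l) := by
    rw [wordInv_append, wordInv_append, wordInv_eq_of_braidPair hpq]
  refine ⟨p, q, l, hpq, hl, ?_, hlu, wordInv_eq.trans (hlu.trans huv)⟩
  change IsReduced n (j :: q ++ l)
  simpa only [IsReduced, List.mem_append, hpq.mem_iff, wordInv_eq, List.length_append,
    hpq.length_eq] using hl

end ReducedWords

section NilCoxeter

variable {M : Type*}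

/-- Matsumoto's theorem for `Bₙ`. -/
lemma prod_map_eq_of_isReduced [Monoid M] {d : ℕ → M}
    (hd : ∀ {p q}, BraidPair p q → (p.map d).prod = (q.map d).prod) {n : ℕ} {a b : List ℕ}
    (ha : IsReduced n a) (hb : IsReduced n b) (hab : wordInv a = wordInv b) :
    (a.map d).prod = (b.map d).prod := by
  induction hm : a.length generalizing a b with
  | zero =>
    have hb₀ : b.length = 0 := by rw [← hb.2, ← hab, ha.2, hm]
    rw [List.length_eq_zero_iff] at hm hb₀
    rw [hm, hb₀]
  | succ m ih =>
    have of_head_eq {i : ℕ} {u v : List ℕ} (hu : IsReduced n (i :: u)) (hv : IsReduced n (i :: v))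
        (huv : wordInv (i :: u) = wordInv (i :: v)) (hlen : u.length = m) :
        ((i :: u).map d).prod = ((i :: v).map d).prod := by
      rw [wordInv_cons, wordInv_cons, mul_left_inj] at huv
      rw [List.map_cons, List.map_cons, List.prod_cons, List.prod_cons,
        ih (isReduced_cons.1 hu).2.1 (isReduced_cons.1 hv).2.1 huv hlen]
    have of_head_lt {i j : ℕ} {u v : List ℕ} (hij : i < j) (hu : IsReduced n (i :: u))
        (hv : IsReduced n (j :: v)) (huv : wordInv (i :: u) = wordInv (j :: v))
        (hulen : u.length = m) (hvlen : v.length = m) :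
        ((i :: u).map d).prod = ((j :: v).map d).prod := by
      obtain ⟨p, q, l, hpq, hp, hq, hpu, hqv⟩ := exists_isReduced_braidPair hij hu hv huv
      rw [of_head_eq hu hp hpu.symm hulen, of_head_eq hv hq hqv.symm hvlen]
      simpa [mul_assoc] using congrArg (· * (l.map d).prod) (hd hpq)
    have hm' : b.length = m + 1 := by rw [← hb.2, ← hab, ha.2, hm]
    obtain ⟨i, u, rfl⟩ := List.exists_cons_of_length_eq_add_one hm
    obtain ⟨j, v, rfl⟩ := List.exists_cons_of_length_eq_add_one hm'
    rw [List.length_cons, add_left_inj] at hm hm'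
    rcases lt_trichotomy i j with hij | rfl | hji
    · exact of_head_lt hij ha hb hab hm hm'
    · exact of_head_eq ha hb hab hm
    · exact (of_head_lt hji hb ha hab.symm hm' hm).symm

/-- The relations of the nil-Coxeter algebra of type `B`. -/
structure IsNilCoxeter [MonoidWithZero M] (d : ℕ → M) : Prop where
  mul_self (i : ℕ) : d i * d i = 0
  prod_map_eq {p q : List ℕ} (h : BraidPair p q) : (p.map d).prod = (q.map d).prod

lemma IsNilCoxeter.prod_map_eq_zero [MonoidWithZero M] {d : ℕ → M} (hd : IsNilCoxeter d) {n : ℕ}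
    {a : List ℕ} (ha : ∀ i ∈ a, i < n) (h : ¬IsReduced n a) : (a.map d).prod = 0 := by
  induction a with
  | nil => exact absurd ⟨by simp, signedLength_one n⟩ h
  | cons i u ih =>
    rw [List.forall_mem_cons] at ha
    rw [List.map_cons, List.prod_cons]
    by_cases hu : IsReduced n u
    · have hneg : rootValue i (wordInv u) < 0 := by
        rw [isReduced_cons] at h
        have := rootValue_ne_zero i (wordInv u)
        grind
      obtain ⟨l, hl, hlu⟩ := exists_isReduced_append (p := [i]) (by simpa using ha.1)
        (fixesAbove_wordInv ha.2) ⟨hneg, trivial⟩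
      rw [prod_map_eq_of_isReduced hd.prod_map_eq hu hl hlu.symm, List.singleton_append,
        List.map_cons, List.prod_cons, ← mul_assoc, hd.mul_self, zero_mul]
    · rw [ih ha.2 hu, mul_zero]

lemma isNilCoxeter_dividedDiff : IsNilCoxeter dividedDiff :=
  ⟨dividedDiff_mul_self, prod_map_dividedDiff_eq⟩

end NilCoxeter

section Words

/-- The words of length `m` over the alphabet `{0, …, n - 1}`. -/
def words (n : ℕ) : ℕ → Finset (List ℕ)
  | 0 => {[]}
  | m + 1 => (range n ×ˢ words n m).image fun p => p.1 :: p.2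

lemma mem_words {n m : ℕ} {l : List ℕ} :
    l ∈ words n m ↔ (∀ i ∈ l, i < n) ∧ l.length = m := by
  induction m generalizing l with
  | zero => simp +contextual [words, List.length_eq_zero_iff]
  | succ m ih =>
    cases l with
    | nil => simp [words]
    | cons i l => simp [words, ih, and_assoc]

lemma pow_sum_range {R : Type*} [Semiring R] (d : ℕ → R) (n m : ℕ) :
    (∑ k ∈ range n, d k) ^ m = ∑ a ∈ words n m, (a.map d).prod := by
  induction m with
  | zero => simp [words]
  | succ m ih =>
    have cons_injective : Function.Injective fun p : ℕ × List ℕ => p.1 :: p.2 := by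
      rintro ⟨i, l⟩ ⟨j, k⟩ h
      simpa using h
    rw [pow_succ', ih, sum_mul_sum, words, sum_image cons_injective.injOn, sum_product]
    simp

lemma prod_mul_pow_sum_range {R : Type*} [Semiring R] (d : ℕ → R) {n : ℕ} {p : List ℕ}
    (hp : ∀ i ∈ p, i < n) (m : ℕ) :
    (p.map d).prod * (∑ k ∈ range n, d k) ^ m =
      ∑ a ∈ words n (p.length + m) with p <+: a, (a.map d).prod := by
  have image_eq : {a ∈ words n (p.length + m) | p <+: a} = (words n m).image (p ++ ·) := by
    ext a
    simp only [mem_filter, mem_image, mem_words]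
    constructor
    · rintro ⟨⟨ha, hlen⟩, b, rfl⟩
      exact ⟨b, ⟨fun i hi => ha i (List.mem_append_right p hi), by simpa using hlen⟩, rfl⟩
    · rintro ⟨b, ⟨hb, rfl⟩, rfl⟩
      refine ⟨⟨fun i hi => ?_, List.length_append⟩, List.prefix_append p b⟩
      exact (List.mem_append.1 hi).elim (hp i) (hb i)
  rw [pow_sum_range, mul_sum, image_eq, sum_image (List.append_right_injective p).injOn]
  simp

end Words

section LongestWords

open scoped Classical in
/-- The reduced words of the longest element of `Bₙ`. -/
noncomputable def longestWords (n : ℕ) : Finset (List ℕ) :=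
  {l ∈ words n (n ^ 2) | wordInv l = longest n}

lemma mem_longestWords {n : ℕ} {l : List ℕ} :
    l ∈ longestWords n ↔ (∀ i ∈ l, i < n) ∧ l.length = n ^ 2 ∧ wordInv l = longest n := by
  classical
  rw [longestWords, mem_filter, mem_words, and_assoc]

lemma length_of_mem_longestWords {n : ℕ} {l : List ℕ} (hl : l ∈ longestWords n) :
    l.length = n ^ 2 := (mem_longestWords.1 hl).2.1

lemma mem_longestWords_iff_isReduced {n : ℕ} {l : List ℕ} :
    l ∈ longestWords n ↔ IsReduced n l ∧ wordInv l = longest n := by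
  rw [mem_longestWords, IsReduced, and_assoc]
  refine and_congr_right fun _ => and_congr_left fun h => ?_
  rw [h, signedLength_longest, eq_comm]

lemma longestWords_nonempty (n : ℕ) : (longestWords n).Nonempty := by
  obtain ⟨l, hl⟩ := exists_isReduced (fixesAbove_longest n)
  exact ⟨l, mem_longestWords_iff_isReduced.2 hl⟩

lemma coe_prod_map_simpleRefl (l : List ℕ) : (l.map simpleRefl).prod.1 = wordProd l := by
  rw [wordProd, Subgroup.val_list_prod, List.map_map]
  rfl

lemma wordInv_eq_longest_iff {n : ℕ} {l : List ℕ} :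
    wordInv l = longest n ↔ wordProd l = w0B n := by
  rw [wordInv, inv_eq_iff_eq_inv, longest_inv, ← coe_prod_map_simpleRefl]
  exact Subtype.ext_iff

lemma RSet_w0B (n : ℕ) : RSet n (w0B n) = longestWords n := by
  have le_length {l : List ℕ} (hl : ∀ i ∈ l, i < n) (h : wordProd l = w0B n) :
      n ^ 2 ≤ l.length := by
    rw [← signedLength_longest, ← wordInv_eq_longest_iff.2 h]
    exact signedLength_wordInv_le hl
  ext l
  rw [mem_coe, mem_longestWords, wordInv_eq_longest_iff]
  constructor
  · rintro ⟨hl, hw, hmin⟩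
    obtain ⟨a, ha⟩ := longestWords_nonempty n
    rw [mem_longestWords, wordInv_eq_longest_iff] at ha
    exact ⟨hl, ((hmin a ha.1 ha.2.2).trans_eq ha.2.1).antisymm (le_length hl hw), hw⟩
  · rintro ⟨hl, hlen, hw⟩
    exact ⟨hl, hw, fun a ha haw => hlen.trans_le (le_length ha haw)⟩

lemma IsNilCoxeter.prod_mul_pow_eq_card_nsmul {R : Type*} [Semiring R] {d : ℕ → R}
    (hd : IsNilCoxeter d) {n : ℕ} {p a : List ℕ} (hp : ∀ i ∈ p, i < n) (hlen : p.length ≤ n ^ 2)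
    (ha : a ∈ longestWords n) :
    (p.map d).prod * (∑ k ∈ range n, d k) ^ (n ^ 2 - p.length) =
      #{b ∈ longestWords n | p <+: b} • (a.map d).prod := by
  classical
  have subset : {b ∈ longestWords n | p <+: b} ⊆ {b ∈ words n (n ^ 2) | p <+: b} :=
    filter_subset_filter _ (filter_subset _ _)
  rw [prod_mul_pow_sum_range d hp, Nat.add_sub_cancel' hlen, ← sum_const]
  symm
  rw [← sum_subset subset fun b hb hb' => ?_]
  · refine sum_congr rfl fun b hb => ?_
    have hb := mem_longestWords_iff_isReduced.1 (mem_filter.1 hb).1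
    have ha := mem_longestWords_iff_isReduced.1 ha
    exact prod_map_eq_of_isReduced hd.prod_map_eq ha.1 hb.1 (ha.2.trans hb.2.symm)
  · rw [mem_filter, mem_words] at hb
    refine hd.prod_map_eq_zero hb.1.1 fun hred => hb' (mem_filter.2 ⟨?_, hb.2⟩)
    refine mem_longestWords_iff_isReduced.2
      ⟨hred, eq_longest_of_signedLength_eq (fixesAbove_wordInv hb.1.1) ?_⟩
    rw [hred.2, hb.1.2]

lemma rotate_one_mem_longestWords {n : ℕ} {a : List ℕ} (ha : a ∈ longestWords n) :
    a.rotate 1 ∈ longestWords n := by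
  rw [mem_longestWords] at ha ⊢
  obtain ⟨hlt, hlen, hw⟩ := ha
  refine ⟨by simpa using hlt, by simpa using hlen, ?_⟩
  cases a with
  | nil => exact hw
  | cons i l =>
    have conj : wordInv l = longest n * simpleRefl i := by
      rw [← hw, wordInv_cons, mul_simpleRefl_mul_simpleRefl]
    rw [List.rotate_cons_succ, List.rotate_zero, wordInv_append, conj, wordInv_cons, wordInv_nil,
      one_mul, ← simpleRefl_mul_longest (hlt i List.mem_cons_self), ← mul_assoc,
      simpleRefl_mul_self, one_mul]

lemma image_rotate_longestWords (n j : ℕ) :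
    (longestWords n).image (fun a => a.rotate j) = longestWords n := by
  refine eq_of_subset_of_card_le (image_subset_iff.2 fun a ha => ?_)
    (card_image_of_injective _ (List.rotate_injective j)).ge
  induction j with
  | zero => simpa using ha
  | succ j ih =>
    rw [← List.rotate_rotate]
    exact rotate_one_mem_longestWords ih

end LongestWords

section YangBaxterMoves

lemma isYB_append {a : List ℕ} (h : 3 ≤ a.length) (b : List ℕ) : isYB (a ++ b) = isYB a := by
  match a, h with
  | _ :: _ :: _ :: _, _ => rfl

lemma isYB_eq_false {a : List ℕ} (h : a.length < 3) : isYB a = false := by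
  match a, h with
  | [], _ => rfl
  | [_], _ => rfl
  | [_, _], _ => rfl

lemma isYB_iff {a : List ℕ} :
    isYB a ↔ ∃ k > 0, [k, k + 1, k] <+: a ∨ [k + 1, k, k + 1] <+: a := by
  match a with
  | [] => simp [isYB]
  | [_] => simp [isYB]
  | [_, _] => simp [isYB]
  | x :: y :: z :: l =>
    simp only [isYB, List.cons_prefix_cons, List.nil_prefix, and_true, Bool.or_eq_true,
      Bool.and_eq_true, bne_iff_ne, beq_iff_eq]
    constructor
    · rintro (⟨⟨hx, rfl⟩, rfl⟩ | ⟨⟨hy, rfl⟩, rfl⟩)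
      · exact ⟨z, Nat.pos_of_ne_zero hx, .inl ⟨rfl, rfl, rfl⟩⟩
      · exact ⟨y, Nat.pos_of_ne_zero hy, .inr ⟨rfl, rfl, rfl⟩⟩
    · grind

lemma card_isYB_drop {n j : ℕ} (hj : j + 3 ≤ n ^ 2) :
    #{a ∈ longestWords n | isYB (a.drop j)} = #{a ∈ longestWords n | isYB a} := by
  conv_rhs => rw [← image_rotate_longestWords n j, filter_image,
    card_image_of_injective _ (List.rotate_injective j)]
  refine congrArg card (filter_congr fun a ha => ?_)
  have hlen := length_of_mem_longestWords ha
  rw [List.rotate_eq_drop_append_take (by lia), isYB_append (by rw [List.length_drop]; lia)]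

lemma sum_ybCount {n : ℕ} (hn : 2 ≤ n) :
    ∑ a ∈ longestWords n, ybCount a = (n ^ 2 - 2) * #{a ∈ longestWords n | isYB a} := by
  have h4 : 4 ≤ n ^ 2 := Nat.pow_le_pow_left hn 2
  calc ∑ a ∈ longestWords n, ybCount a
      = ∑ a ∈ longestWords n, ∑ j ∈ range (n ^ 2), if isYB (a.drop j) then 1 else 0 :=
        sum_congr rfl fun a ha => by rw [ybCount, card_filter, length_of_mem_longestWords ha]
    _ = ∑ j ∈ range (n ^ 2), #{a ∈ longestWords n | isYB (a.drop j)} := by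
        rw [sum_comm]
        simp only [card_filter]
    _ = ∑ j ∈ range (n ^ 2 - 2), #{a ∈ longestWords n | isYB (a.drop j)} := by
        refine (sum_subset (range_subset_range.2 (Nat.sub_le _ _)) fun j _ hj => ?_).symm
        rw [mem_range] at hj
        refine card_eq_zero.2 (filter_eq_empty_iff.2 fun a ha => ?_)
        have hlen := length_of_mem_longestWords ha
        rw [isYB_eq_false (by rw [List.length_drop]; lia)]
        exact Bool.false_ne_true
    _ = (n ^ 2 - 2) * #{a ∈ longestWords n | isYB a} := by
        rw [sum_congr rfl fun j hj => card_isYB_drop (by rw [mem_range] at hj; lia), sum_const,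
          card_range, smul_eq_mul]

lemma card_isYB (n : ℕ) :
    #{a ∈ longestWords n | isYB a} = ∑ k ∈ Ico 1 (n - 1),
      (#{a ∈ longestWords n | [k, k + 1, k] <+: a} +
        #{a ∈ longestWords n | [k + 1, k, k + 1] <+: a}) := by
  have eq_of_prefix {p q a : List ℕ} (hp : p <+: a) (hq : q <+: a) (hlen : p.length = q.length) :
      p = q := (List.prefix_of_prefix_length_le hp hq hlen.le).eq_of_length hlen
  have biUnion_eq : {a ∈ longestWords n | isYB a} = (Ico 1 (n - 1)).biUnion fun k =>
      {a ∈ longestWords n | [k, k + 1, k] <+: a} ∪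
        {a ∈ longestWords n | [k + 1, k, k + 1] <+: a} := by
    ext a
    simp only [mem_biUnion, mem_union, mem_filter, isYB_iff, mem_Ico, ← and_or_left]
    constructor
    · rintro ⟨ha, k, hk, h⟩
      have hlt := (mem_longestWords.1 ha).1 (k + 1) (by
        rcases h with h | h <;> exact h.subset (by simp))
      exact ⟨k, ⟨hk, by lia⟩, ha, h⟩
    · rintro ⟨k, hk, ha, h⟩
      exact ⟨ha, k, hk.1, h⟩
  rw [biUnion_eq, card_biUnion]
  · refine sum_congr rfl fun k _ => card_union_of_disjoint (disjoint_filter.2 fun a _ h h' => ?_)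
    simpa using eq_of_prefix h h' rfl
  · refine fun k _ j _ hkj => disjoint_left.2 fun a ha ha' => ?_
    simp only [mem_union, mem_filter] at ha ha'
    rcases ha with ⟨-, h⟩ | ⟨-, h⟩ <;> rcases ha' with ⟨-, h'⟩ | ⟨-, h'⟩
    all_goals
      have := eq_of_prefix h h' rfl
      grind

end YangBaxterMoves

section FlagSeries

open PowerSeries

/-- The contribution `1 + a X` of the coordinate `a` to the series dressing the modes. -/
noncomputable def linFactor (a : ℚ) : ℚ⟦X⟧ := 1 + C a * X

lemma constantCoeff_linFactor (a : ℚ) : constantCoeff (linFactor a) = 1 := by simp [linFactor]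

lemma rescale_neg_one_linFactor (a : ℚ) : rescale (-1) (linFactor a) = linFactor (-a) := by
  have rescale_C : rescale (-1) (C a) = C a :=
    DFunLike.congr_fun (Subsingleton.elim ((rescale (-1)).comp C) C) a
  simp [linFactor, rescale_C]

lemma linFactor_mul_inv_cancel (a : ℚ) : linFactor a * (linFactor a)⁻¹ = 1 :=
  PowerSeries.mul_inv_cancel _ (by simp [constantCoeff_linFactor])

/-- The series `(1 + a X) / (1 + |a| X)`, which differs from `1 + a X` by a factor that does not
depend on the sign of `a` and is inverted by `X ↦ -X`. -/
noncomputable def unitaryFactor (a : ℚ) : ℚ⟦X⟧ := linFactor a * (linFactor |a|)⁻¹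

lemma constantCoeff_unitaryFactor (a : ℚ) : constantCoeff (unitaryFactor a) = 1 := by
  simp [unitaryFactor, constantCoeff_linFactor]

lemma unitaryFactor_neg_mul_linFactor (a : ℚ) :
    unitaryFactor (-a) * linFactor a = unitaryFactor a * linFactor (-a) := by
  rw [unitaryFactor, unitaryFactor, abs_neg]
  ring

lemma linFactor_mul_linFactor_neg_abs (a : ℚ) :
    linFactor |a| * linFactor (-|a|) = linFactor a * linFactor (-a) := by
  rcases abs_choice a with h | h <;> rw [h]
  rw [neg_neg, mul_comm]

lemma unitaryFactor_mul_rescale (a : ℚ) :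
    unitaryFactor a * rescale (-1) (unitaryFactor a) = 1 := by
  have rescaled := congrArg (rescale (-1 : ℚ)) (linFactor_mul_inv_cancel |a|)
  rw [map_mul, map_one, rescale_neg_one_linFactor] at rescaled
  rw [unitaryFactor, map_mul, rescale_neg_one_linFactor, mul_mul_mul_comm,
    ← linFactor_mul_linFactor_neg_abs, mul_mul_mul_comm, linFactor_mul_inv_cancel, rescaled,
    one_mul]

/-- The series `∏ j < n, (1 + x j X) * ∏ j < k, (1 - x j X)` up to the normalization in
`unitaryFactor`, which is invariant under signed permutations of the `x j`. -/
noncomputable def flagSeries (n k : ℕ) (x : ℕ → ℚ) : ℚ⟦X⟧ :=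
  (∏ j ∈ range n, unitaryFactor (x j)) * ∏ j ∈ range k, linFactor (-x j)

lemma flagSeries_succ (n k : ℕ) (x : ℕ → ℚ) :
    flagSeries n (k + 1) x = flagSeries n k x * linFactor (-x k) := by
  rw [flagSeries, prod_range_succ, ← mul_assoc, flagSeries]

lemma X_dvd_flagSeries_sub_one (n k : ℕ) (x : ℕ → ℚ) : X ∣ flagSeries n k x - 1 := by
  simp [X_dvd_iff, flagSeries, constantCoeff_linFactor, constantCoeff_unitaryFactor]

lemma flagSeries_mul_rescale (n k : ℕ) (x : ℕ → ℚ) :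
    flagSeries n k x * rescale (-1) (flagSeries n k x) =
      ∏ j ∈ range k, (linFactor (-x j) * linFactor (x j)) := by
  simp only [flagSeries, map_mul, map_prod]
  rw [mul_mul_mul_comm, ← prod_mul_distrib, ← prod_mul_distrib,
    prod_eq_one fun j _ => unitaryFactor_mul_rescale (x j), one_mul]
  simp only [rescale_neg_one_linFactor, neg_neg]

lemma coeff_prod_linFactor_eq_zero (k : ℕ) (x : ℕ → ℚ) {d : ℕ} (hd : 2 * k < d) :
    coeff d (∏ j ∈ range k, (linFactor (-x j) * linFactor (x j))) = 0 := by
  induction k generalizing d with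
  | zero => simp [coeff_one, hd.ne']
  | succ k ih =>
    obtain ⟨d, rfl⟩ := Nat.exists_eq_add_of_le' (show 2 ≤ d by lia)
    have expand (p : ℚ⟦X⟧) :
        p * (linFactor (-x k) * linFactor (x k)) = p - C (x k ^ 2) * (p * X ^ 2) := by
      simp only [linFactor, map_neg, map_pow]
      ring
    rw [prod_range_succ, expand, map_sub, coeff_C_mul, coeff_mul_X_pow, ih (by lia), ih (by lia),
      mul_zero, sub_zero]

/-- The values of a signed permutation, indexed from `0`. -/
def coord (w : SignedPerm) (j : ℕ) : ℚ := w.1 (j + 1)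

lemma coord_mul_simpleRefl_succ (w : SignedPerm) (k : ℕ) :
    coord (w * simpleRefl (k + 1)) = coord w ∘ Equiv.swap k (k + 1) := by
  funext j
  simp only [coord, Function.comp_apply, mul_simpleRefl_apply]
  rw [sB_apply k.succ_pos, Equiv.swap_apply_def]
  congr 2
  split_ifs <;> lia

lemma coord_mul_simpleRefl_zero (w : SignedPerm) :
    coord (w * simpleRefl 0) = Function.update (coord w) 0 (-coord w 0) := by
  funext j
  rcases j with _ | j
  · rw [Function.update_self, coord, mul_simpleRefl_apply, sB_zero_apply]
    simp [coord, signedPerm_neg]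
  · rw [Function.update_of_ne j.succ_ne_zero, coord, mul_simpleRefl_apply, sB_zero_apply,
      if_neg (by lia), if_neg (by lia), coord]

lemma prod_coord_mul_simpleRefl_succ {M : Type*} [CommMonoid M] (w : SignedPerm) {k m : ℕ}
    (hm : m ≠ k + 1) (g : ℚ → M) :
    ∏ j ∈ range m, g (coord (w * simpleRefl (k + 1)) j) = ∏ j ∈ range m, g (coord w j) := by
  rw [coord_mul_simpleRefl_succ]
  refine prod_equiv (Equiv.swap k (k + 1)) (fun j => ?_) fun j _ => rfl
  rw [Equiv.swap_apply_def]
  split_ifs <;> simp only [mem_range] <;> lia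

lemma prod_coord_succ_mul_simpleRefl_zero {M : Type*} [CommMonoid M] (w : SignedPerm) (m : ℕ)
    (g : ℚ → M) :
    ∏ j ∈ range m, g (coord (w * simpleRefl 0) (j + 1)) = ∏ j ∈ range m, g (coord w (j + 1)) := by
  simp [coord_mul_simpleRefl_zero]

lemma coord_zero_mul_simpleRefl_zero (w : SignedPerm) :
    coord (w * simpleRefl 0) 0 = -coord w 0 := by
  simp [coord_mul_simpleRefl_zero]

lemma flagSeries_coord_mul_simpleRefl {n k m : ℕ} (hk : k < n) (hm : m ≠ k) (w : SignedPerm) :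
    flagSeries n m (coord (w * simpleRefl k)) = flagSeries n m (coord w) := by
  rcases k with _ | k
  · obtain ⟨n, rfl⟩ := Nat.exists_eq_add_one_of_ne_zero hk.ne'
    obtain ⟨m, rfl⟩ := Nat.exists_eq_add_one_of_ne_zero hm
    simp only [flagSeries, prod_range_succ' _ n, prod_range_succ' _ m]
    rw [prod_coord_succ_mul_simpleRefl_zero, coord_zero_mul_simpleRefl_zero, neg_neg,
      prod_coord_succ_mul_simpleRefl_zero w m fun a => linFactor (-a), mul_mul_mul_comm,
      unitaryFactor_neg_mul_linFactor, mul_mul_mul_comm]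
  · rw [flagSeries, prod_coord_mul_simpleRefl_succ w hk.ne',
      prod_coord_mul_simpleRefl_succ w hm fun a => linFactor (-a), flagSeries]

lemma flagSeries_succ_sub_mul_simpleRefl {n k : ℕ} (hk : k + 1 < n) (w : SignedPerm) :
    flagSeries n (k + 1) (coord w) - flagSeries n (k + 1) (coord (w * simpleRefl (k + 1))) =
      C (rootValue (k + 1) w : ℚ) * (X * flagSeries n k (coord w)) := by
  have coord_k : coord (w * simpleRefl (k + 1)) k = coord w (k + 1) := by
    simp [coord_mul_simpleRefl_succ]
  have rootValue_eq : (rootValue (k + 1) w : ℚ) = coord w (k + 1) - coord w k := by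
    simp [rootValue_of_pos, coord]
  rw [flagSeries_succ, flagSeries_succ, flagSeries_coord_mul_simpleRefl hk (by lia), coord_k,
    rootValue_eq, linFactor, linFactor, map_sub, map_neg, map_neg]
  ring

lemma exists_flagSeries_zero_eq {n : ℕ} (hn : 0 < n) (w : SignedPerm) :
    ∃ u, flagSeries n 0 (coord w) = linFactor (coord w 0) * u ∧
      flagSeries n 0 (coord (w * simpleRefl 0)) = linFactor (-coord w 0) * u := by
  obtain ⟨n, rfl⟩ := Nat.exists_eq_add_one_of_ne_zero hn.ne'
  refine ⟨(linFactor |coord w 0|)⁻¹ * ∏ j ∈ range n, unitaryFactor (coord w (j + 1)), ?_, ?_⟩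
  all_goals
    rw [flagSeries, prod_range_zero, prod_range_succ', unitaryFactor]
  · ring
  · rw [prod_coord_succ_mul_simpleRefl_zero, coord_zero_mul_simpleRefl_zero, abs_neg]
    ring

end FlagSeries

section Correlator

open CliffordAlgebra PowerSeries

lemma dividedDiff_orderedProd {A : Type*} [Ring A] [Algebra ℚ A] (T : A →ₗ[ℚ] ℚ)
    (f : ℕ → SignedPerm → A) {j k n : ℕ} {w : SignedPerm} {u : A} (hj : j < n)
    (hf : ∀ i < n, i ≠ j → f i (w * simpleRefl k) = f i w)
    (hu : f j w - f j (w * simpleRefl k) = (rootValue k w : ℚ) • u) :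
    dividedDiff k (fun v => T (orderedProd (fun i => f i v) n)) w =
      T (orderedProd (Function.update (fun i => f i w) j u) n) := by
  have reflected : orderedProd (fun i => f i (w * simpleRefl k)) n =
      orderedProd (Function.update (fun i => f i w) j (f j (w * simpleRefl k))) n := by
    refine orderedProd_congr fun i hi => ?_
    by_cases h : i = j
    · rw [h, Function.update_self]
    · rw [Function.update_of_ne h, hf i hi h]
  have original : orderedProd (fun i => f i w) n =
      orderedProd (Function.update (fun i => f i w) j (f j w)) n := by
    rw [Function.update_eq_self j fun i => f i w]
  rw [dividedDiff_apply, div_eq_iff (rootValue_cast_ne_zero k w), ← map_sub, original, reflected]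
  simp only [orderedProd_update _ _ hj]
  rw [← sub_mul, ← mul_sub, hu, mul_smul_comm, smul_mul_assoc, map_smul, smul_eq_mul, mul_comm]

/-- The mode `φ a` multiplied by `flagSeries n k`, evaluated at the coordinates of `w`. -/
noncomputable def dressedMode (n a k : ℕ) (w : SignedPerm) : ModeAlgebra n :=
  ι _ (X ^ (2 * n - a) * flagSeries n k (coord w))

variable {n : ℕ}

lemma lowering_dressedMode {a : ℕ} (ha : 0 < a) (han : a ≤ 2 * n) (k : ℕ) (w : SignedPerm) :
    lowering n (dressedMode n a k w) = dressedMode n (a - 1) k w := by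
  rw [dressedMode, lowering_ι, ← mul_assoc, ← pow_succ', dressedMode,
    show 2 * n - a + 1 = 2 * n - (a - 1) by lia]

lemma dressedMode_succ {a : ℕ} (ha : 0 < a) (han : a ≤ 2 * n) (k : ℕ) (w : SignedPerm) :
    dressedMode n a (k + 1) w = dressedMode n a k w - coord w k • dressedMode n (a - 1) k w := by
  rw [dressedMode, dressedMode, dressedMode, ← map_smul, ← map_sub, smul_eq_C_mul, flagSeries_succ,
    linFactor, ← show 2 * n - a + 1 = 2 * n - (a - 1) by lia, map_neg]
  congr 1
  ring

lemma dressedMode_mul_simpleRefl {k m : ℕ} (hk : k < n) (hm : m ≠ k) (a : ℕ) (w : SignedPerm) :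
    dressedMode n a m (w * simpleRefl k) = dressedMode n a m w := by
  rw [dressedMode, flagSeries_coord_mul_simpleRefl hk hm, dressedMode]

lemma dressedMode_succ_sub_mul_simpleRefl {a k : ℕ} (ha : 0 < a) (han : a ≤ 2 * n)
    (hk : k + 1 < n) (w : SignedPerm) :
    dressedMode n a (k + 1) w - dressedMode n a (k + 1) (w * simpleRefl (k + 1)) =
      (rootValue (k + 1) w : ℚ) • dressedMode n (a - 1) k w := by
  rw [dressedMode, dressedMode, dressedMode, ← map_smul, ← map_sub, ← mul_sub,
    flagSeries_succ_sub_mul_simpleRefl hk, smul_eq_C_mul,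
    ← show 2 * n - a + 1 = 2 * n - (a - 1) by lia]
  congr 1
  ring

lemma dressedMode_mul_self {k : ℕ} (hk : k < n) (w : SignedPerm) :
    dressedMode n (2 * k + 1) k w * dressedMode n (2 * k + 1) k w = 0 := by
  have square : X ^ (2 * n - (2 * k + 1)) * flagSeries n k (coord w) *
        rescale (-1) (X ^ (2 * n - (2 * k + 1)) * flagSeries n k (coord w)) =
      C ((-1) ^ (2 * n - (2 * k + 1))) *
        ((∏ j ∈ range k, (linFactor (-coord w j) * linFactor (coord w j))) *
          X ^ (2 * (2 * n - (2 * k + 1)))) := by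
    rw [← flagSeries_mul_rescale n, map_mul, map_pow, rescale_neg_one_X, neg_pow X, map_pow,
      map_neg, map_one]
    ring
  rw [dressedMode, ι_sq_scalar, LinearMap.BilinMap.toQuadraticMap_apply, modeForm_self, square,
    coeff_C_mul, show 4 * n = 4 * k + 2 + 2 * (2 * n - (2 * k + 1)) by lia, coeff_mul_X_pow,
    coeff_prod_linFactor_eq_zero _ _ (by lia), mul_zero, map_zero]

/-- The value of a functional on a product of `n` dressed modes, as a function on signed
permutations. -/
noncomputable def correlator (T : ModeAlgebra n →ₗ[ℚ] ℚ) (a m : ℕ → ℕ) (w : SignedPerm) : ℚ :=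
  T (orderedProd (fun i => dressedMode n (a i) (m i) w) n)

lemma dividedDiff_correlator (T : ModeAlgebra n →ₗ[ℚ] ℚ) {a m : ℕ → ℕ} {b j k : ℕ}
    (hk : k + 1 < n) (hj : j < n) (hm : ∀ i < n, m i = k + 1 ↔ i = j) (ha : a j = b + 1)
    (hb : b < 2 * n) :
    dividedDiff (k + 1) (correlator T a m) =
      correlator T (Function.update a j b) (Function.update m j k) := by
  funext w
  refine (dividedDiff_orderedProd T (fun i => dressedMode n (a i) (m i)) hj
    (fun i hi hij => dressedMode_mul_simpleRefl hk (hij ∘ (hm i hi).1) _ w)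
    (u := dressedMode n b k w) ?_).trans ?_
  · rw [(hm j hj).2 rfl, ha]
    exact dressedMode_succ_sub_mul_simpleRefl b.succ_pos hb hk w
  · refine congrArg T (orderedProd_congr fun i _ => ?_)
    by_cases h : i = j
    · subst h
      simp
    · simp [h]

lemma iteratedVacuum_correlator {a : ℕ → ℕ} (m : ℕ → ℕ) (hpos : ∀ i < n, 0 < a i)
    (ha : MonotoneOn a (Set.Iio n)) (han : ∀ i < n, a i ≤ 2 * n) (w : SignedPerm) :
    correlator (iteratedVacuum n (∑ i ∈ range n, a i)) a m w =
      (∑ i ∈ range n, a i).factorial * thrallProduct a n :=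
  iteratedVacuum_orderedProd_ι hpos ha han fun i _ => X_dvd_flagSeries_sub_one n (m i) (coord w)

end Correlator

section StaircaseCorrelator

open CliffordAlgebra PowerSeries

variable (n : ℕ)

/-- The correlator of the dressed modes with staircase exponents, after `s` lowerings. -/
noncomputable def staircaseCorrelator (s : ℕ) : SignedPerm → ℚ :=
  correlator (iteratedVacuum n s) staircase id

variable {n}

lemma dividedDiff_zero_staircaseCorrelator (hn : 0 < n) (s : ℕ) (w : SignedPerm) :
    dividedDiff 0 (staircaseCorrelator n s) w =
      iteratedVacuum n s (orderedProd (Function.update (fun i => dressedMode n (staircase i) i w) 0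
        (lowering n (dressedMode n (staircase 0) 0 w))) n) := by
  obtain ⟨u, hu, hu'⟩ := exists_flagSeries_zero_eq hn w
  have difference : dressedMode n (staircase 0) 0 w -
      dressedMode n (staircase 0) 0 (w * simpleRefl 0) =
        (rootValue 0 w : ℚ) • ι _ (X ^ (2 * n) * u) := by
    have rootValue_eq : (rootValue 0 w : ℚ) = 2 * coord w 0 := by simp [rootValue_zero, coord]
    have shift : (X : ℚ⟦X⟧) ^ (2 * n) = X ^ (2 * n - staircase 0) * X := by
      rw [← pow_succ, staircase, show 2 * n - (2 * 0 + 1) + 1 = 2 * n by lia]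
    rw [dressedMode, dressedMode, ← map_sub, ← map_smul, hu, hu', smul_eq_C_mul, rootValue_eq,
      linFactor, linFactor, shift, map_neg, map_mul C, map_ofNat]
    congr 1
    ring
  have congruent : X ^ (2 * n + 1) ∣ X ^ (2 * n) * u - X ^ (2 * n) * flagSeries n 0 (coord w) :=
    ⟨-C (coord w 0) * u, by rw [hu, linFactor]; ring⟩
  refine (dividedDiff_orderedProd _ (fun i => dressedMode n (staircase i) i) hn
    (fun i _ hi => dressedMode_mul_simpleRefl hn hi _ w) difference).trans ?_
  rw [lowering_dressedMode (by simp [staircase]) (by simp [staircase]; lia), dressedMode,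
    orderedProd_update _ _ hn, orderedProd_update _ _ hn, orderedProd_zero, one_mul, one_mul,
    ← sub_eq_zero, ← map_sub, ← sub_mul, ← map_sub]
  exact iteratedVacuum_ι_mul_eq_zero s congruent _

/- The divided difference of a factor differs from its lowering by a multiple of the preceding
factor, whose square vanishes. -/
lemma dividedDiff_succ_staircaseCorrelator {k : ℕ} (hk : k + 1 < n) (s : ℕ) (w : SignedPerm) :
    dividedDiff (k + 1) (staircaseCorrelator n s) w =
      iteratedVacuum n s (orderedProd (Function.update (fun i => dressedMode n (staircase i) i w)
        (k + 1) (lowering n (dressedMode n (staircase (k + 1)) (k + 1) w))) n) := by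
  have pos : 0 < staircase (k + 1) := by simp [staircase]
  have le : staircase (k + 1) ≤ 2 * n := by rw [staircase]; lia
  have pred_pred : staircase (k + 1) - 1 - 1 = staircase k := by simp only [staircase]; lia
  have repeated : orderedProd (Function.update (fun i => dressedMode n (staircase i) i w) (k + 1)
      (dressedMode n (staircase k) k w)) n = 0 := by
    refine orderedProd_eq_zero hk ?_
    rw [Function.update_self, Function.update_of_ne (by lia)]
    exact dressedMode_mul_self (by lia) w
  refine (dividedDiff_orderedProd _ (fun i => dressedMode n (staircase i) i) hk
    (fun i _ hi => dressedMode_mul_simpleRefl hk hi _ w)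
    (dressedMode_succ_sub_mul_simpleRefl pos le hk w)).trans ?_
  rw [orderedProd_update _ _ hk] at repeated
  rw [lowering_dressedMode pos le, dressedMode_succ (by simp [staircase]) (by lia), pred_pred,
    orderedProd_update _ _ hk, orderedProd_update _ _ hk, mul_sub, sub_mul, mul_smul_comm,
    smul_mul_assoc, repeated, smul_zero, sub_zero]

lemma sum_dividedDiff_staircaseCorrelator (s : ℕ) :
    (∑ k ∈ range n, dividedDiff k) (staircaseCorrelator n s) = staircaseCorrelator n (s + 1) := by
  funext w
  have lowering_expansion : staircaseCorrelator n (s + 1) w =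
      ∑ k ∈ range n, iteratedVacuum n s (orderedProd (Function.update
        (fun i => dressedMode n (staircase i) i w) k
        (lowering n (dressedMode n (staircase k) k w))) n) := by
    rw [← map_sum, lowering, ← derivationLift_orderedProd, ← lowering, ← iteratedVacuum_succ]
    rfl
  rw [lowering_expansion, LinearMap.sum_apply, Finset.sum_apply]
  refine sum_congr rfl fun k hk => ?_
  have hk := mem_range.1 hk
  rcases k with _ | k
  exacts [dividedDiff_zero_staircaseCorrelator hk s w, dividedDiff_succ_staircaseCorrelator hk s w]

lemma sum_dividedDiff_pow_staircaseCorrelator (s : ℕ) :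
    ((∑ k ∈ range n, dividedDiff k) ^ s) (staircaseCorrelator n 0) = staircaseCorrelator n s := by
  induction s with
  | zero => rfl
  | succ s ih => rw [pow_succ', Module.End.mul_apply, ih, sum_dividedDiff_staircaseCorrelator]

lemma staircaseCorrelator_sq (w : SignedPerm) :
    staircaseCorrelator n (n ^ 2) w = (n ^ 2).factorial * thrallProduct staircase n := by
  rw [← sum_staircase]
  exact iteratedVacuum_correlator id (fun i _ => by simp [staircase])
    (strictMono_staircase.monotone.monotoneOn _) (fun i hi => by rw [staircase]; lia) w

lemma braidShape_apply (k i : ℕ) :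
    braidShape k i = if i = k then 2 * k else if i = k + 1 then 2 * k + 1 else 2 * i + 1 := by
  simp only [braidShape, Function.update_apply, staircase]
  grind

lemma monotone_braidShape (k : ℕ) : Monotone (braidShape k) :=
  monotone_nat_of_le_succ fun i => by grind [braidShape_apply]

lemma braid_dividedDiff_staircaseCorrelator {k : ℕ} (hk : k + 2 < n) (w : SignedPerm) :
    (dividedDiff (k + 1) * dividedDiff (k + 2) * dividedDiff (k + 1))
        (staircaseCorrelator n (n ^ 2 - 3)) w =
      (n ^ 2 - 3).factorial * thrallProduct (braidShape (k + 1)) n := by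
  have sum_eq := sum_braidShape hk
  have shape : Function.update (Function.update (Function.update staircase (k + 1) (2 * k + 2))
      (k + 2) (2 * k + 4)) (k + 2) (2 * k + 3) = braidShape (k + 1) := by
    rw [Function.update_idem, braidShape, show 2 * (k + 1) = 2 * k + 2 by ring]
  rw [Module.End.mul_apply, Module.End.mul_apply, staircaseCorrelator,
    dividedDiff_correlator (j := k + 1) (b := 2 * k + 2) _ (by lia) (by lia) (by simp)
      (by simp only [staircase]; ring) (by lia),
    dividedDiff_correlator (j := k + 2) (b := 2 * k + 4) _ hk hk (by grind)
      (by simp only [staircase, Function.update_apply]; grind) (by lia),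
    dividedDiff_correlator (j := k + 2) (b := 2 * k + 3) _ (by lia) hk (by grind) (by simp)
      (by lia), shape, ← sum_eq, Nat.add_sub_cancel]
  exact iteratedVacuum_correlator _ (fun i _ => by grind [braidShape_apply])
    ((monotone_braidShape _).monotoneOn _) (fun i _ => by grind [braidShape_apply]) w

end StaircaseCorrelator

section Counting

variable {n : ℕ}

lemma card_prefix_mul {a p : List ℕ} (ha : a ∈ longestWords n) (hp : ∀ i ∈ p, i < n)
    (hlen : p.length ≤ n ^ 2) (w : SignedPerm) :
    (#{b ∈ longestWords n | p <+: b} : ℚ) *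
        (a.map dividedDiff).prod (staircaseCorrelator n 0) w =
      (p.map dividedDiff).prod (staircaseCorrelator n (n ^ 2 - p.length)) w := by
  have h := isNilCoxeter_dividedDiff.prod_mul_pow_eq_card_nsmul hp hlen ha
  rw [← sum_dividedDiff_pow_staircaseCorrelator (n ^ 2 - p.length), ← Module.End.mul_apply, h,
    LinearMap.smul_apply, Pi.smul_apply, nsmul_eq_mul]

lemma card_longestWords_mul {a : List ℕ} (ha : a ∈ longestWords n) (w : SignedPerm) :
    (#(longestWords n) : ℚ) * (a.map dividedDiff).prod (staircaseCorrelator n 0) w =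
      (n ^ 2).factorial * thrallProduct staircase n := by
  simpa [staircaseCorrelator_sq] using card_prefix_mul ha (p := []) (by simp) (by simp) w

lemma card_braid_prefix_mul {a p : List ℕ} {k : ℕ} (ha : a ∈ longestWords n) (hk : k + 2 < n)
    (hp : p = [k + 1, k + 2, k + 1] ∨ p = [k + 2, k + 1, k + 2]) (w : SignedPerm) :
    (#{b ∈ longestWords n | p <+: b} : ℚ) *
        (a.map dividedDiff).prod (staircaseCorrelator n 0) w =
      (n ^ 2 - 3).factorial * thrallProduct (braidShape (k + 1)) n := by
  have hlen : p.length = 3 := by rcases hp with rfl | rfl <;> rfl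
  have prod_eq : (p.map dividedDiff).prod =
      dividedDiff (k + 1) * dividedDiff (k + 2) * dividedDiff (k + 1) := by
    rcases hp with rfl | rfl
    · simp [mul_assoc]
    · rw [dividedDiff_braid k.succ_pos]
      simp [mul_assoc]
  rw [card_prefix_mul ha (by rcases hp with rfl | rfl <;> simp <;> lia) (by rw [hlen]; nlinarith),
    hlen, prod_eq, braid_dividedDiff_staircaseCorrelator hk]

lemma card_isYB_mul {a : List ℕ} (hn : 2 ≤ n) (ha : a ∈ longestWords n) (w : SignedPerm) :
    (#{b ∈ longestWords n | isYB b} : ℚ) *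
        (a.map dividedDiff).prod (staircaseCorrelator n 0) w =
      2 * (n ^ 2 - 3).factorial *
        (thrallProduct staircase n * (n * (n ^ 2 - 1) * (n - 2))) := by
  rw [card_isYB, Nat.cast_sum, sum_mul, ← sum_thrallProduct_braidShape hn, mul_sum]
  refine sum_congr rfl fun k hk => ?_
  obtain ⟨hk0, hkn⟩ := mem_Ico.1 hk
  obtain ⟨k, rfl⟩ := Nat.exists_eq_add_one_of_ne_zero (Nat.one_le_iff_ne_zero.1 hk0)
  rw [Nat.cast_add, add_mul, card_braid_prefix_mul ha (by lia) (.inl rfl),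
    card_braid_prefix_mul ha (by lia) (.inr rfl)]
  ring

theorem card_isYB_longestWords (hn : 2 ≤ n) :
    n * (n ^ 2 - 2) * #{a ∈ longestWords n | isYB a} = (2 * n - 4) * #(longestWords n) := by
  obtain ⟨a, ha⟩ := longestWords_nonempty n
  have total := card_longestWords_mul ha 1
  have moves := card_isYB_mul hn ha 1
  set c := (a.map dividedDiff).prod (staircaseCorrelator n 0) 1
  have hc : c ≠ 0 := by
    have := thrallProduct_pos (n := n) (strictMono_staircase.strictMonoOn _)
    refine right_ne_zero_of_mul (a := (#(longestWords n) : ℚ)) ?_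
    rw [total]
    positivity
  have factorial_sq : ((n ^ 2).factorial : ℚ) =
      n ^ 2 * (n ^ 2 - 1) * (n ^ 2 - 2) * (n ^ 2 - 3).factorial := by
    obtain ⟨m, hm⟩ := Nat.exists_eq_add_of_le' (show 3 ≤ n ^ 2 by nlinarith)
    have hm' : (n : ℚ) ^ 2 = m + 3 := mod_cast hm
    rw [hm', hm, Nat.add_sub_cancel, Nat.factorial_succ, Nat.factorial_succ, Nat.factorial_succ]
    push_cast
    ring
  have cancelled : (n * (n ^ 2 - 2) * #{a ∈ longestWords n | isYB a} : ℚ) =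
      (2 * n - 4) * #(longestWords n) := by
    refine mul_right_cancel₀ hc ?_
    rw [factorial_sq] at total
    linear_combination (n * (n ^ 2 - 2) : ℚ) * moves - (2 * n - 4) * total
  have two_le_sq : 2 ≤ n ^ 2 := by nlinarith
  rw [← Nat.cast_inj (R := ℚ)]
  push_cast [Nat.cast_sub two_le_sq, Nat.cast_sub (show 4 ≤ 2 * n by lia)]
  exact cancelled

end Counting

end YangBaxterB

/-- For every `n ≥ 3`, the expected number of Yang–Baxter moves in a uniformly random
reduced decomposition of the longest element `w₀ᴮ ∈ Bₙ` equals `2 - 4/n`; equivalently,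
`n · Σ_{ω ∈ R(w₀ᴮ)} yb(ω) = (2n - 4) · |R(w₀ᴮ)|`. -/
theorem expected_yang_baxter_B (n : ℕ) (hn : 3 ≤ n) :
    n * ∑ᶠ ω ∈ RSet n (w0B n), ybCount ω
      = (2 * n - 4) * Nat.card ↥(RSet n (w0B n)) := by
  have two_le : 2 ≤ n := by lia
  rw [YangBaxterB.RSet_w0B, finsum_mem_coe_finset, YangBaxterB.sum_ybCount two_le, ← mul_assoc,
    YangBaxterB.card_isYB_longestWords two_le, Nat.card_coe_set_eq, Set.ncard_coe_finset]
end

section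
/- For every integer n ≥ 2, Σ_{ω ∈ R(w_0^B)} m(ω) = 2(n² − 3) · |R(w′)|, where m(ω) denotes the number of 01 moves in ω. -/
/-!
The longest element is central in `Bₙ`, so `R(w₀ᴮ)` is closed under cyclic rotation of words. Hence
the number of its words in which a given word `u` occurs at position `j` does not depend on `j`,
and equals the number of its words starting with `u`. If `u` is itself a reduced word of the
longest element of `Bₘ`, cancelling `u` identifies the latter with the reduced words of the element
negating exactly `m + 1, …, n`. As reduced words of the longest elements have lengths `m²` and
`n²`, the numbers of positive roots, there are `n² - m² + 1` positions. The two 01 moves are the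
case `m = 2`: both `0101` and `1010` are reduced words of the longest element of `B₂`.
-/

section Rotation

variable {α M : Type*}

lemma prod_rotate_of_commute [LeftCancelMonoid M] {l : List M}
    (h : ∀ x ∈ l, Commute l.prod x) (k : ℕ) : (l.rotate k).prod = l.prod := by
  induction k with
  | zero => rw [List.rotate_zero]
  | succ k ih =>
    rw [← List.rotate_rotate]
    cases hl : l.rotate k with
    | nil => rw [List.rotate_nil, ← hl, ih]
    | cons a t =>
      have hprod : l.prod = a * t.prod := by rw [← ih, hl, List.prod_cons]
      have hcomm : Commute l.prod a := h a (List.mem_rotate.1 (hl ▸ List.mem_cons_self))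
      have hswap : t.prod * a = l.prod :=
        mul_left_cancel (a := a) (by rw [← mul_assoc, ← hprod, hcomm.eq])
      rw [List.rotate_cons_succ, List.rotate_zero, List.prod_append, List.prod_singleton, hswap]

lemma prefix_rotate_iff_prefix_drop {u l : List α} {j : ℕ} (h : j + u.length ≤ l.length) :
    u <+: l.rotate j ↔ u <+: l.drop j := by
  rw [List.rotate_eq_drop_append_take (by omega), List.isPrefix_append_of_length]
  rw [List.length_drop]
  omega

variable [DecidableEq α]

/-- The number of occurrences of the word `u` as a factor (contiguous subword) of `l`, counted by
starting position. Positions range over `0, …, l.length - 1`, so the occurrence of the empty word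
at the very end is not counted. -/
def factorCount (u l : List α) : ℕ :=
  ((Finset.range l.length).filter fun j => u <+: l.drop j).card

lemma factorCount_eq_sum {u : List α} (hu : u ≠ []) (l : List α) :
    factorCount u l =
      ∑ j ∈ Finset.range (l.length + 1 - u.length), if u <+: l.rotate j then 1 else 0 := by
  have hpos : 0 < u.length := List.length_pos_iff.2 hu
  rw [← Finset.card_filter, factorCount]
  congr 1
  ext j
  simp only [Finset.mem_filter, Finset.mem_range]
  constructor
  · rintro ⟨hj, hpre⟩
    have hle := hpre.length_le
    rw [List.length_drop] at hle
    exact ⟨by omega, (prefix_rotate_iff_prefix_drop (by omega)).2 hpre⟩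
  · rintro ⟨hj, hpre⟩
    exact ⟨by omega, (prefix_rotate_iff_prefix_drop (by omega)).1 hpre⟩

lemma card_filter_prefix_rotate {S : Finset (List α)} (hS : ∀ l ∈ S, ∀ k, l.rotate k ∈ S)
    (u : List α) (j : ℕ) :
    (S.filter fun l => u <+: l.rotate j).card = (S.filter fun l => u <+: l).card := by
  have himage : S.image (List.rotate · j) = S :=
    Finset.eq_of_subset_of_card_le (Finset.image_subset_iff.2 fun l hl => hS l hl j)
      (Finset.card_image_of_injective S (List.rotate_injective j)).ge
  conv_rhs => rw [← himage, Finset.filter_image]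
  exact (Finset.card_image_of_injective _ (List.rotate_injective j)).symm

lemma sum_factorCount_of_rotate_mem {S : Finset (List α)} {N : ℕ} {u : List α} (hu : u ≠ [])
    (hlen : ∀ l ∈ S, l.length = N) (hS : ∀ l ∈ S, ∀ k, l.rotate k ∈ S) :
    ∑ l ∈ S, factorCount u l = (N + 1 - u.length) * (S.filter fun l => u <+: l).card := by
  calc ∑ l ∈ S, factorCount u l
      = ∑ l ∈ S, ∑ j ∈ Finset.range (N + 1 - u.length), if u <+: l.rotate j then 1 else 0 :=
        Finset.sum_congr rfl fun l hl => by rw [factorCount_eq_sum hu, hlen l hl]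
    _ = ∑ j ∈ Finset.range (N + 1 - u.length), (S.filter fun l => u <+: l.rotate j).card := by
        rw [Finset.sum_comm]
        simp only [Finset.card_filter]
    _ = (N + 1 - u.length) * (S.filter fun l => u <+: l).card := by
        simp only [card_filter_prefix_rotate hS, Finset.sum_const, Finset.card_range, smul_eq_mul]

end Rotation

section SignedPermutations

lemma sB_apply (i : ℕ) (x : ℤ) : sB i x =
    if i = 0 then (if x = 1 then -1 else if x = -1 then 1 else x)
    else if x = i then (i : ℤ) + 1 else if x = i + 1 then (i : ℤ)
    else if x = -i then -((i : ℤ) + 1) else if x = -((i : ℤ) + 1) then -(i : ℤ) else x := by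
  unfold sB
  by_cases h : i = 0
  · simp [h, Equiv.swap_apply_def]
  · simp only [h, if_false, Equiv.Perm.mul_apply, Equiv.swap_apply_def]
    split_ifs <;> omega

lemma sB_odd (i : ℕ) : Function.Odd (sB i) := by
  intro x
  simp only [sB_apply]
  split_ifs <;> omega

lemma wordProd_nil : wordProd [] = 1 := rfl

lemma wordProd_cons (i : ℕ) (l : List ℕ) : wordProd (i :: l) = sB i * wordProd l :=
  List.prod_cons

lemma wordProd_append (l m : List ℕ) : wordProd (l ++ m) = wordProd l * wordProd m := by
  simp only [wordProd, List.map_append, List.prod_append]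

lemma wordProd_odd (l : List ℕ) : Function.Odd (wordProd l) := by
  induction l with
  | nil => exact fun _ => rfl
  | cons i l ih =>
    intro x
    rw [wordProd_cons, Equiv.Perm.mul_apply, Equiv.Perm.mul_apply, ih x, sB_odd]

lemma w0B_apply (n : ℕ) (x : ℤ) : w0B n x = if -(n : ℤ) ≤ x ∧ x ≤ n then -x else x := rfl

lemma commute_w0B_sB {n i : ℕ} (hi : i < n) : Commute (w0B n) (sB i) := by
  ext x
  simp only [Equiv.Perm.mul_apply, sB_apply, w0B_apply]
  split_ifs <;> omega

end SignedPermutations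

section Inversions

/-- The inversions of a signed permutation `w` of `{±1, …, ±n}`: the pairs `(a, b)` with
`-b ≤ a < b` and `a ≠ 0` such that `w b < w a`. The bound `-b ≤ a` keeps one of each two pairs
`(a, b)`, `(-b, -a)`, so that these pairs correspond to the positive roots of type `B`. -/
noncomputable def signedInversions (n : ℕ) (w : Equiv.Perm ℤ) : Finset (ℤ × ℤ) :=
  (Finset.Icc (-(n : ℤ)) n ×ˢ Finset.Icc 1 (n : ℤ)).filter fun p =>
    -p.2 ≤ p.1 ∧ p.1 < p.2 ∧ p.1 ≠ 0 ∧ w p.2 < w p.1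

lemma mem_signedInversions {n : ℕ} {w : Equiv.Perm ℤ} {a b : ℤ} :
    (a, b) ∈ signedInversions n w ↔ b ≤ n ∧ -b ≤ a ∧ a < b ∧ a ≠ 0 ∧ w b < w a := by
  simp only [signedInversions, Finset.mem_filter, Finset.mem_product, Finset.mem_Icc]
  omega

lemma signedInversions_one (n : ℕ) : signedInversions n 1 = ∅ := by
  ext ⟨a, b⟩
  simp only [mem_signedInversions, Equiv.Perm.one_apply, Finset.notMem_empty, iff_false]
  omega

lemma eq_of_sB_lt_sB {i : ℕ} {u v : ℤ} (huv : u < v) (h : sB i v < sB i u) :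
    (i = 0 ∧ u = -1 ∧ v = 1) ∨ (u = i ∧ v = i + 1) ∨ (u = -(i + 1) ∧ v = -i) := by
  simp only [sB_apply] at h
  split_ifs at h <;> omega

lemma card_signedInversions_sB_mul_le (n i : ℕ) {w : Equiv.Perm ℤ} (hw : Function.Odd w) :
    (signedInversions n (sB i * w)).card ≤ (signedInversions n w).card + 1 := by
  have hnew : ∀ a b, (a, b) ∈ signedInversions n (sB i * w) \ signedInversions n w →
      -b ≤ a ∧ w a ≠ 0 ∧ w b ≠ 0 ∧ w a < w b ∧ sB i (w b) < sB i (w a) := by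
    intro a b hab
    simp only [Finset.mem_sdiff, mem_signedInversions, Equiv.Perm.mul_apply] at hab
    have hne_zero : ∀ {x}, x ≠ 0 → w x ≠ 0 := fun hx h =>
      hx (w.injective (h.trans hw.map_zero.symm))
    have hne : w a ≠ w b := w.injective.ne (by omega)
    have ha : w a ≠ 0 := hne_zero (by omega)
    have hb : w b ≠ 0 := hne_zero (by omega)
    omega
  have hcard : (signedInversions n (sB i * w) \ signedInversions n w).card ≤ 1 := by
    rw [Finset.card_le_one]
    rintro ⟨a, b⟩ hab ⟨a', b'⟩ hab'
    obtain ⟨hba, ha, hb, hwlt, hrev⟩ := hnew a b hab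
    obtain ⟨hba', ha', hb', hwlt', hrev'⟩ := hnew a' b' hab'
    -- `sᵢ` reverses only one pair of nonzero numbers, up to `(u, v) ↦ (-v, -u)`.
    have hsame_or_neg : (w a' = w a ∧ w b' = w b) ∨ (w a' = w (-b) ∧ w b' = w (-a)) := by
      have := eq_of_sB_lt_sB hwlt hrev
      have := eq_of_sB_lt_sB hwlt' hrev'
      rw [hw, hw]
      omega
    simp only [w.injective.eq_iff] at hsame_or_neg
    rw [Prod.mk.injEq]
    omega
  have := Finset.card_le_card_sdiff_add_card
    (s := signedInversions n (sB i * w)) (t := signedInversions n w)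
  omega

lemma card_signedInversions_wordProd_le (n : ℕ) (l : List ℕ) :
    (signedInversions n (wordProd l)).card ≤ l.length := by
  induction l with
  | nil => rw [wordProd_nil, signedInversions_one, Finset.card_empty, List.length_nil]
  | cons i l ih =>
    rw [wordProd_cons, List.length_cons]
    exact (card_signedInversions_sB_mul_le n i (wordProd_odd l)).trans (by omega)

lemma sq_le_card_signedInversions_w0B (n : ℕ) : n ^ 2 ≤ (signedInversions n (w0B n)).card := by
  let toPair : ℕ × ℕ → ℤ × ℤ := fun p =>
    if p.1 < p.2 then (p.1 + 1, p.2 + 1) else (-(p.2 + 1), p.1 + 1)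
  have hmaps : ∀ p ∈ Finset.range n ×ˢ Finset.range n, toPair p ∈ signedInversions n (w0B n) := by
    rintro ⟨i, j⟩ hp
    simp only [Finset.mem_product, Finset.mem_range] at hp
    simp only [toPair]
    split_ifs <;> rw [mem_signedInversions, w0B_apply, w0B_apply] <;> split_ifs <;> omega
  have hinj : Function.Injective toPair := by
    rintro ⟨i, j⟩ ⟨i', j'⟩ h
    simp only [toPair] at h
    split_ifs at h <;> simp only [Prod.mk.injEq] at h ⊢ <;> omega
  calc n ^ 2 = (Finset.range n ×ˢ Finset.range n).card := by
        rw [Finset.card_product, Finset.card_range, sq]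
    _ ≤ (signedInversions n (w0B n)).card :=
        Finset.card_le_card_of_injOn toPair hmaps hinj.injOn

lemma sq_le_length_of_wordProd_eq_w0B {n : ℕ} {l : List ℕ} (h : wordProd l = w0B n) :
    n ^ 2 ≤ l.length :=
  (sq_le_card_signedInversions_w0B n).trans (h ▸ card_signedInversions_wordProd_le n l)

end Inversions

section SignChanges

/-- The word `k ⋯ 1 0 1 ⋯ k`, representing the reflection that changes the sign of `k + 1`. -/
def signChangeWord : ℕ → List ℕ
  | 0 => [0]
  | k + 1 => (k + 1) :: (signChangeWord k ++ [k + 1])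

lemma length_signChangeWord (k : ℕ) : (signChangeWord k).length = 2 * k + 1 := by
  induction k with
  | zero => rfl
  | succ k ih =>
    rw [signChangeWord, List.length_cons, List.length_append, ih, List.length_singleton]
    ring

lemma le_of_mem_signChangeWord {k i : ℕ} (hi : i ∈ signChangeWord k) : i ≤ k := by
  induction k with
  | zero => exact (List.mem_singleton.1 hi).le
  | succ k ih =>
    simp only [signChangeWord, List.mem_cons, List.mem_append, List.not_mem_nil, or_false] at hi
    rcases hi with rfl | hi | rfl
    exacts [le_rfl, (ih hi).trans k.le_succ, le_rfl]

lemma wordProd_signChangeWord_apply (k : ℕ) (x : ℤ) :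
    wordProd (signChangeWord k) x = if |x| = k + 1 then -x else x := by
  induction k generalizing x with
  | zero =>
    have habs := abs_cases x
    simp only [signChangeWord, wordProd_cons, wordProd_nil, mul_one, sB_apply]
    split_ifs <;> omega
  | succ k ih =>
    simp only [signChangeWord, wordProd_cons, wordProd_append, wordProd_nil, mul_one,
      Equiv.Perm.mul_apply, ih]
    have habs := abs_cases x
    have habs' := abs_cases (sB (k + 1) x)
    simp only [sB_apply] at habs' ⊢
    push_cast at habs' ⊢
    split_ifs at habs' ⊢ <;> omega

/-- A word representing the signed permutation that changes the signs of `a + 1, …, b`. For `a = 0`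
this is the longest element of `B_b`, and for `a = 2` it is the element `w'` of `B_b`. -/
def signFlipWord (a b : ℕ) : List ℕ :=
  (List.Ico a b).flatMap signChangeWord

lemma signFlipWord_append {a b c : ℕ} (hab : a ≤ b) (hbc : b ≤ c) :
    signFlipWord a b ++ signFlipWord b c = signFlipWord a c := by
  rw [signFlipWord, signFlipWord, ← List.flatMap_append, List.Ico.append_consecutive hab hbc,
    signFlipWord]

lemma signFlipWord_succ {a b : ℕ} (h : a ≤ b) :
    signFlipWord a (b + 1) = signFlipWord a b ++ signChangeWord b := by
  rw [signFlipWord, List.Ico.succ_top h, List.flatMap_append, List.flatMap_singleton, signFlipWord]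

lemma signFlipWord_eq_nil {a b : ℕ} (h : b ≤ a) : signFlipWord a b = [] := by
  rw [signFlipWord, List.Ico.eq_nil_of_le h, List.flatMap_nil]

lemma length_signFlipWord_zero (n : ℕ) : (signFlipWord 0 n).length = n ^ 2 := by
  induction n with
  | zero => rfl
  | succ n ih =>
    rw [signFlipWord_succ n.zero_le, List.length_append, ih, length_signChangeWord]
    ring

lemma lt_of_mem_signFlipWord {a b i : ℕ} (hi : i ∈ signFlipWord a b) : i < b := by
  obtain ⟨k, hk, hik⟩ := List.mem_flatMap.1 hi
  exact (le_of_mem_signChangeWord hik).trans_lt (List.Ico.mem.1 hk).2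

lemma wordProd_signFlipWord_apply (a b : ℕ) (x : ℤ) :
    wordProd (signFlipWord a b) x = if a < |x| ∧ |x| ≤ b then -x else x := by
  induction b generalizing x with
  | zero =>
    have := abs_nonneg x
    rw [signFlipWord_eq_nil a.zero_le, wordProd_nil, Equiv.Perm.one_apply, if_neg (by omega)]
  | succ b ih =>
    obtain hab | hba := le_or_gt a b
    · simp only [signFlipWord_succ hab, wordProd_append, Equiv.Perm.mul_apply,
        wordProd_signChangeWord_apply, apply_ite (wordProd _), ih, abs_neg]
      split_ifs <;> omega
    · rw [signFlipWord_eq_nil hba, wordProd_nil, Equiv.Perm.one_apply, if_neg (by omega)]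

lemma wordProd_signFlipWord_zero (n : ℕ) : wordProd (signFlipWord 0 n) = w0B n := by
  ext x
  have habs := abs_cases x
  rw [wordProd_signFlipWord_apply, w0B_apply]
  split_ifs <;> omega

lemma wordProd_signFlipWord_two_apply (n : ℕ) (x : ℤ) :
    wordProd (signFlipWord 2 n) x = wpFun n x := by
  have habs := abs_cases x
  rw [wordProd_signFlipWord_apply, wpFun]
  split_ifs <;> omega

end SignChanges

section ReducedWords

variable {n : ℕ} {w : Equiv.Perm ℤ} {l l₀ : List ℕ}

lemma mem_RSet_iff_length_eq (h₀ : l₀ ∈ RSet n w) :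
    l ∈ RSet n w ↔ (∀ i ∈ l, i < n) ∧ wordProd l = w ∧ l.length = l₀.length := by
  obtain ⟨hlt₀, hprod₀, hmin₀⟩ := h₀
  constructor
  · rintro ⟨hlt, hprod, hmin⟩
    exact ⟨hlt, hprod, le_antisymm (hmin l₀ hlt₀ hprod₀) (hmin₀ l hlt hprod)⟩
  · rintro ⟨hlt, hprod, hlen⟩
    exact ⟨hlt, hprod, hlen ▸ hmin₀⟩

lemma finite_RSet (n : ℕ) (w : Equiv.Perm ℤ) : (RSet n w).Finite := by
  obtain hempty | ⟨l₀, h₀⟩ := (RSet n w).eq_empty_or_nonempty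
  · rw [hempty]
    exact Set.finite_empty
  · refine ((List.finite_length_eq (Fin n) l₀.length).image (List.map Fin.val)).subset ?_
    intro l hl
    obtain ⟨hlt, -, hlen⟩ := (mem_RSet_iff_length_eq h₀).1 hl
    lift l to List (Fin n) using hlt
    exact ⟨l, by simpa using hlen, rfl⟩

lemma mem_RSet_of_append {u v : List ℕ} (h : u ++ v ∈ RSet n w) : v ∈ RSet n (wordProd v) := by
  obtain ⟨hlt, hprod, hmin⟩ := h
  rw [List.forall_mem_append] at hlt
  refine ⟨hlt.2, rfl, fun v' hlt' hprod' => ?_⟩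
  have hlen := hmin (u ++ v') (List.forall_mem_append.2 ⟨hlt.1, hlt'⟩)
    (by rw [wordProd_append, hprod', ← wordProd_append, hprod])
  rwa [List.length_append, List.length_append, Nat.add_le_add_iff_left] at hlen

lemma append_mem_RSet_iff {u v₀ v : List ℕ} (h₀ : u ++ v₀ ∈ RSet n w) :
    u ++ v ∈ RSet n w ↔ v ∈ RSet n (wordProd v₀) := by
  have hu := (List.forall_mem_append.1 h₀.1).1
  rw [mem_RSet_iff_length_eq h₀, mem_RSet_iff_length_eq (mem_RSet_of_append h₀), ← h₀.2.1,
    wordProd_append, wordProd_append, mul_right_inj, List.length_append, List.length_append,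
    Nat.add_left_cancel_iff, List.forall_mem_append, and_iff_right hu]

lemma ncard_prefix_RSet {u v₀ : List ℕ} (h₀ : u ++ v₀ ∈ RSet n w) :
    {l ∈ RSet n w | u <+: l}.ncard = (RSet n (wordProd v₀)).ncard := by
  have himage : {l ∈ RSet n w | u <+: l} = (u ++ ·) '' RSet n (wordProd v₀) := by
    ext l
    constructor
    · rintro ⟨hl, v, rfl⟩
      exact ⟨v, (append_mem_RSet_iff h₀).1 hl, rfl⟩
    · rintro ⟨v, hv, rfl⟩
      exact ⟨(append_mem_RSet_iff h₀).2 hv, List.prefix_append u v⟩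
  rw [himage, Set.ncard_image_of_injective _ (List.append_right_injective u)]

lemma rotate_mem_RSet (hw : ∀ i < n, Commute w (sB i)) (hl : l ∈ RSet n w) (k : ℕ) :
    l.rotate k ∈ RSet n w := by
  obtain ⟨hlt, hprod, -⟩ := (mem_RSet_iff_length_eq hl).1 hl
  have hcomm : ∀ x ∈ l.map sB, Commute (l.map sB).prod x := by
    rw [List.forall_mem_map, ← wordProd, hprod]
    exact fun i hi => hw i (hlt i hi)
  refine (mem_RSet_iff_length_eq hl).2
    ⟨fun i hi => hlt i (List.mem_rotate.1 hi), ?_, List.length_rotate l k⟩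
  rw [wordProd, List.map_rotate, prod_rotate_of_commute hcomm, ← wordProd, hprod]

lemma finsum_factorCount_RSet (hw : ∀ i < n, Commute w (sB i)) (hl₀ : l₀ ∈ RSet n w)
    {u : List ℕ} (hu : u ≠ []) :
    ∑ᶠ l ∈ RSet n w, factorCount u l =
      (l₀.length + 1 - u.length) * {l ∈ RSet n w | u <+: l}.ncard := by
  have hfin := finite_RSet n w
  rw [finsum_mem_eq_finite_toFinset_sum _ hfin, sum_factorCount_of_rotate_mem (N := l₀.length) hu,
    ← Set.ncard_coe_finset, Finset.coe_filter]
  · simp only [Set.Finite.mem_toFinset]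
  · exact fun l hl => ((mem_RSet_iff_length_eq hl₀).1 (hfin.mem_toFinset.1 hl)).2.2
  · simpa only [Set.Finite.mem_toFinset] using fun l hl => rotate_mem_RSet hw hl

end ReducedWords

section LongestElement

lemma signFlipWord_zero_mem_RSet (n : ℕ) : signFlipWord 0 n ∈ RSet n (w0B n) :=
  ⟨fun _ => lt_of_mem_signFlipWord, wordProd_signFlipWord_zero n, fun _ _ h =>
    (length_signFlipWord_zero n).trans_le (sq_le_length_of_wordProd_eq_w0B h)⟩

lemma append_signFlipWord_mem_RSet {m n : ℕ} {u : List ℕ} (hmn : m ≤ n)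
    (hu : u ∈ RSet m (w0B m)) : u ++ signFlipWord m n ∈ RSet n (w0B n) := by
  obtain ⟨hlt, hprod, hlen⟩ := (mem_RSet_iff_length_eq (signFlipWord_zero_mem_RSet m)).1 hu
  refine (mem_RSet_iff_length_eq (signFlipWord_zero_mem_RSet n)).2
    ⟨List.forall_mem_append.2
      ⟨fun i hi => (hlt i hi).trans_le hmn, fun _ => lt_of_mem_signFlipWord⟩, ?_, ?_⟩
  · rw [wordProd_append, hprod, ← wordProd_signFlipWord_zero m, ← wordProd_append,
      signFlipWord_append m.zero_le hmn, wordProd_signFlipWord_zero]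
  · rw [List.length_append, hlen, ← List.length_append, signFlipWord_append m.zero_le hmn]

theorem finsum_factorCount_RSet_w0B {m n : ℕ} {u : List ℕ} (hm : m ≠ 0) (hmn : m ≤ n)
    (hu : u ∈ RSet m (w0B m)) :
    ∑ᶠ l ∈ RSet n (w0B n), factorCount u l =
      (n ^ 2 + 1 - m ^ 2) * (RSet n (wordProd (signFlipWord m n))).ncard := by
  have hlen : u.length = m ^ 2 := by
    rw [((mem_RSet_iff_length_eq (signFlipWord_zero_mem_RSet m)).1 hu).2.2,
      length_signFlipWord_zero]
  have hne : u ≠ [] := List.length_pos_iff.1 (hlen ▸ by positivity)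
  rw [finsum_factorCount_RSet (fun _ => commute_w0B_sB) (signFlipWord_zero_mem_RSet n) hne,
    length_signFlipWord_zero, hlen, ncard_prefix_RSet (append_signFlipWord_mem_RSet hmn hu)]

lemma word0101_mem_RSet : [0, 1, 0, 1] ∈ RSet 2 (w0B 2) :=
  signFlipWord_zero_mem_RSet 2

lemma word1010_mem_RSet : [1, 0, 1, 0] ∈ RSet 2 (w0B 2) :=
  rotate_mem_RSet (fun _ => commute_w0B_sB) word0101_mem_RSet 1

end LongestElement

lemma is01_iff_prefix (l : List ℕ) :
    is01 l = true ↔ [0, 1, 0, 1] <+: l ∨ [1, 0, 1, 0] <+: l := by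
  unfold is01
  split
  · simp [@eq_comm _ 0, @eq_comm _ 1, and_assoc]
  next h =>
    simp only [Bool.false_eq_true, false_iff, not_or]
    constructor <;> rintro ⟨t, rfl⟩ <;> exact h _ _ _ _ _ rfl

lemma m01Count_eq_factorCount_add (l : List ℕ) :
    m01Count l = factorCount [0, 1, 0, 1] l + factorCount [1, 0, 1, 0] l := by
  simp only [m01Count, is01_iff_prefix]
  rw [Finset.filter_or, Finset.card_union_of_disjoint, factorCount, factorCount]
  exact Finset.disjoint_filter.2 fun j _ h h' =>
    absurd (List.prefix_of_prefix_length_le h h' le_rfl) (by decide)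

/-- For every `n ≥ 2`, with `w = w' ∈ Bₙ`,
`Σ_{ω ∈ R(w₀ᴮ)} m(ω) = 2(n² - 3) · |R(w')|`. -/
theorem sum_01_eq (n : ℕ) (hn : 2 ≤ n)
    (w : Equiv.Perm ℤ) (hw : ∀ i : ℤ, w i = wpFun n i) :
    ∑ᶠ ω ∈ RSet n (w0B n), m01Count ω
      = 2 * (n ^ 2 - 3) * Nat.card ↥(RSet n w) := by
  have hw' : w = wordProd (signFlipWord 2 n) :=
    Equiv.ext fun x => (hw x).trans (wordProd_signFlipWord_two_apply n x).symm
  simp only [m01Count_eq_factorCount_add]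
  rw [finsum_mem_add_distrib (finite_RSet n _),
    finsum_factorCount_RSet_w0B two_ne_zero hn word0101_mem_RSet,
    finsum_factorCount_RSet_w0B two_ne_zero hn word1010_mem_RSet, ← hw', Nat.card_coe_set_eq,
    show n ^ 2 + 1 - 2 ^ 2 = n ^ 2 - 3 by omega]
  ring
end
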